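/- arXiv:1308.4287 — 3 statements merged into one kernel-verified Lean document; each statement's English description precedes it below -/
import Mathlib

section
/- For every K ≥ 2 and every integer d ≥ 3 there is a constant C = C(K,d) > 0 such that for all n ≥ 2 with dn even the following holds. Let (ρ,μ) be a (d,n)-admissible pair with μ_ii = 0 for all i ∈ {1,…,K}, and let Z_μ denote the number of partitions V₁,…,V_K of V with |V_i| = ρ_i·n for all i and e_Γ(V_i,V_j) = μ_ij·dn for all i,j, where Γ is a uniformly random (n,d)-configuration. Define the probability distribution ρ̂ on {1,…,K}² by ρ̂_ij = ρ_i·ρ_j/(1 − Σ_l ρ_l²) for i ≠ j and ρ̂_ii = 0. Then |(1/n)·ln E[Z_μ] − H(ρ) − (d/2)·ln(1 − Σ_l ρ_l²) + (d/2)·D(μ‖ρ̂)| ≤ C·(ln n)/n. -/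
/-!
Write `n_i = ρ_i n` and `m_ij = μ_ij d n`. The expectation of `Z_μ` has a closed form. By linearity
it is the number `n! / ∏ n_i!` of ordered partitions with the given class sizes, times the
probability that a fixed such partition sees the prescribed edge counts. A configuration matching
a fixed partition is obtained by choosing, for every clone, the class of its partner, in
`∏ (d n_i)! / ∏_{i,j} m_ij!` ways, and then a bijection between the clones of class `i` looking
for class `j` and those of class `j` looking for class `i`, for each pair `i < j`, in
`∏_{i<j} m_ij!` ways; no fixed points occur since `m_ii = 0`. There are
`(dn)! / (2^{dn/2} (dn/2)!)` configurations in total.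

Taking logarithms leaves a fixed number (depending on `K`) of terms `ln k!` with `k ≤ dn`. Each
equals `k ln k - k` up to an error of at most `ln (dn) + 1 = O(ln n)`, uniformly in `k`, zero
included. The main terms combine exactly to `n` times the rate in the claim (`rate_eq`): the factor
`1 - Σ ρ_l²` cancels between its logarithm and the divergence because `μ` has total mass one.

The counts of partitions and of matching configurations both rest on `card_equiv_fiber`, which counts
the bijections compatible with a labelling of source and target; the total number of configurations
is the number of permutations of cycle type `2 + ⋯ + 2`.
-/

open Finset
open scoped Classical

noncomputable section

namespace RRG

/-- An `(n,d)`-configuration: a fixed-point-free involution of the clones `Fin n × Fin d`. -/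
def IsConfig (n d : ℕ) (Γ : Fin n × Fin d → Fin n × Fin d) : Prop :=
  (∀ x, Γ (Γ x) = x) ∧ (∀ x, Γ x ≠ x)

/-- The type of `(n,d)`-configurations. -/
def Config (n d : ℕ) : Type :=
  {Γ : Fin n × Fin d → Fin n × Fin d // IsConfig n d Γ}

instance (n d : ℕ) : Fintype (Config n d) :=
  inferInstanceAs (Fintype {Γ : Fin n × Fin d → Fin n × Fin d // IsConfig n d Γ})

/-- `e_Γ(A,B)`: the number of clones of vertices of `A` that `Γ` matches to clones of
vertices of `B`. -/
def eConf {n d : ℕ} (Γ : Config n d) (A B : Finset (Fin n)) : ℕ :=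
  (univ.filter fun x : Fin n × Fin d => x.1 ∈ A ∧ (Γ.1 x).1 ∈ B).card

/-- The color class `σ⁻¹(i)` as a `Finset`. -/
def colorClass {n k : ℕ} (σ : Fin n → Fin k) (i : Fin k) : Finset (Fin n) :=
  univ.filter fun v => σ v = i

/-- `σ` is a proper `k`-coloring of the configuration `Γ`: no matched pair of clones is
monochromatic. -/
def ProperCol {n d k : ℕ} (Γ : Config n d) (σ : Fin n → Fin k) : Prop :=
  ∀ x : Fin n × Fin d, σ ((Γ.1 x).1) ≠ σ x.1

/-- `σ` is balanced: every color class has size `n/k`. -/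
def BalancedCol {n k : ℕ} (σ : Fin n → Fin k) : Prop :=
  ∀ i : Fin k, (colorClass σ i).card * k = n

/-- Overlap matrix entry `ρ_ij(σ,τ) = (k/n)·|σ⁻¹(i) ∩ τ⁻¹(j)|`. -/
def overlap {n k : ℕ} (σ τ : Fin n → Fin k) (i j : Fin k) : ℝ :=
  (k : ℝ) / (n : ℝ) * ((colorClass σ i ∩ colorClass τ j).card : ℝ)

/-- The cluster `C(σ)`: all balanced proper `k`-colorings `τ` with `ρ_ii(σ,τ) > 0.51` for
all `i`. -/
def cluster {n d k : ℕ} (Γ : Config n d) (σ : Fin n → Fin k) : Finset (Fin n → Fin k) :=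
  univ.filter fun τ : Fin n → Fin k =>
    BalancedCol τ ∧ ProperCol Γ τ ∧ ∀ i : Fin k, (0.51 : ℝ) < overlap σ τ i i

/-- `σ` is separable (w.r.t. the configuration `Γ`), with `κ = (ln k)^500 / k`. -/
def SeparableCol {n d k : ℕ} (Γ : Config n d) (σ : Fin n → Fin k) : Prop :=
  ∀ τ : Fin n → Fin k, BalancedCol τ → ProperCol Γ τ →
    ∀ i j : Fin k, (0.51 : ℝ) < overlap σ τ i j →
      1 - (Real.log k) ^ (500 : ℕ) / (k : ℝ) ≤ overlap σ τ i j

/-- Probability of an event under the uniformly random `(n,d)`-configuration. -/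
def confProb (n d : ℕ) (p : Config n d → Prop) : ℝ :=
  ((univ.filter fun Γ : Config n d => p Γ).card : ℝ) / (Fintype.card (Config n d) : ℝ)

/-- Expectation of a random variable under the uniformly random `(n,d)`-configuration. -/
def confExp (n d : ℕ) (f : Config n d → ℝ) : ℝ :=
  (∑ Γ : Config n d, f Γ) / (Fintype.card (Config n d) : ℝ)

/-- The number of balanced proper `k`-colorings. -/
def Zbal (n d k : ℕ) (Γ : Config n d) : ℕ :=
  (univ.filter fun σ : Fin n → Fin k => BalancedCol σ ∧ ProperCol Γ σ).card

def EZbal (n d k : ℕ) : ℝ := confExp n d fun Γ => (Zbal n d k Γ : ℝ)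

/-- A good `k`-coloring: balanced, proper, separable and with cluster of size at most
`E[Z_bal]/n`. -/
def GoodCol (n d k : ℕ) (Γ : Config n d) (σ : Fin n → Fin k) : Prop :=
  BalancedCol σ ∧ ProperCol Γ σ ∧ SeparableCol Γ σ ∧
    ((cluster Γ σ).card : ℝ) ≤ EZbal n d k / (n : ℝ)

def Zgood (n d k : ℕ) (Γ : Config n d) : ℕ :=
  (univ.filter fun σ : Fin n → Fin k => GoodCol n d k Γ σ).card

def EZgood (n d k : ℕ) : ℝ := confExp n d fun Γ => (Zgood n d k Γ : ℝ)

/-- The number of proper `k`-colorings. -/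
def Zcol (n d k : ℕ) (Γ : Config n d) : ℕ :=
  (univ.filter fun σ : Fin n → Fin k => ProperCol Γ σ).card

def EZcol (n d k : ℕ) : ℝ := confExp n d fun Γ => (Zcol n d k Γ : ℝ)

/-- A balanced `k`-coloring is skewed if some pair of color classes carries an atypical
number of edges. -/
def Skewed {n d k : ℕ} (Γ : Config n d) (σ : Fin n → Fin k) : Prop :=
  ∃ i j : Fin k, i < j ∧
    Real.sqrt n * Real.log n <
      |(eConf Γ (colorClass σ i) (colorClass σ j) : ℝ) -
        (d : ℝ) * n / ((k : ℝ) * ((k : ℝ) - 1))|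

/-- The number of skewed balanced proper `k`-colorings. -/
def Zskew (n d k : ℕ) (Γ : Config n d) : ℕ :=
  (univ.filter fun σ : Fin n → Fin k =>
    BalancedCol σ ∧ ProperCol Γ σ ∧ Skewed Γ σ).card

def EZskew (n d k : ℕ) : ℝ := confExp n d fun Γ => (Zskew n d k Γ : ℝ)

/-- The planted conditions on the edge-density matrix `μ`. -/
def Planted (n d k : ℕ) (μ : Fin k → Fin k → ℝ) : Prop :=
  (∀ i j, 0 ≤ μ i j) ∧ (∑ i, ∑ j, μ i j = 1) ∧ (∀ i j, μ i j = μ j i) ∧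
  (∀ i, μ i i = 0) ∧ (∀ i j, ∃ m : ℕ, μ i j * ((d : ℝ) * n) = m) ∧
  (∀ i j, i ≠ j → |μ i j - 1 / ((k : ℝ) * ((k : ℝ) - 1))| ≤ (n : ℝ) ^ (-(1/3) : ℝ))

/-- `Γ` is compatible with the planted data `(σ,μ)`: `e_Γ(V_i,V_j) = μ_ij·d·n` for all `i,j`. -/
def PlantedMatch {n d k : ℕ} (σ : Fin n → Fin k) (μ : Fin k → Fin k → ℝ)
    (Γ : Config n d) : Prop :=
  ∀ i j, (eConf Γ (colorClass σ i) (colorClass σ j) : ℝ) = μ i j * ((d : ℝ) * n)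

/-- Probability of an event under the planted model `Γ_{σ,μ}` (uniform among configurations
compatible with `(σ,μ)`). -/
def plantedProb (n d k : ℕ) (σ : Fin n → Fin k) (μ : Fin k → Fin k → ℝ)
    (p : Config n d → Prop) : ℝ :=
  ((univ.filter fun Γ : Config n d => PlantedMatch σ μ Γ ∧ p Γ).card : ℝ) /
    ((univ.filter fun Γ : Config n d => PlantedMatch σ μ Γ).card : ℝ)

/-- `V'` satisfies the `(σ,ℓ)`-core condition. -/
def IsCoreSet {n d k : ℕ} (Γ : Config n d) (σ : Fin n → Fin k) (ℓ : ℕ)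
    (V' : Finset (Fin n)) : Prop :=
  ∀ v ∈ V', ∀ i : Fin k, i ≠ σ v → ℓ ≤ eConf Γ {v} (V' ∩ colorClass σ i)

/-- The `(σ,ℓ)`-core: the largest subset satisfying the core condition (equivalently, the
union of all such subsets). -/
def coreSet {n d k : ℕ} (Γ : Config n d) (σ : Fin n → Fin k) (ℓ : ℕ) : Finset (Fin n) :=
  univ.filter fun v => ∃ V' : Finset (Fin n), IsCoreSet Γ σ ℓ V' ∧ v ∈ V'

/-- A vertex `u` is `a`-free: there are at least `a+1` colors `i` such that `u` has no
matched clone in the core intersected with `σ⁻¹(i)`. -/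
def FreeVertex {n d k : ℕ} (Γ : Config n d) (σ : Fin n → Fin k) (ℓ a : ℕ)
    (u : Fin n) : Prop :=
  a + 1 ≤ (univ.filter fun i : Fin k =>
    eConf Γ {u} (coreSet Γ σ ℓ ∩ colorClass σ i) = 0).card

/-- A `(d,n)`-admissible pair `(ρ,μ)`. -/
def Admissible (K d n : ℕ) (ρ : Fin K → ℝ) (μ : Fin K → Fin K → ℝ) : Prop :=
  (∀ i, 0 ≤ ρ i) ∧ (∑ i, ρ i = 1) ∧
  (∀ i j, 0 ≤ μ i j) ∧ (∑ i, ∑ j, μ i j = 1) ∧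
  (∀ i j, μ i j = μ j i) ∧
  (∀ i, ∃ m : ℕ, ρ i * (n : ℝ) = m) ∧
  (∀ i j, ∃ m : ℕ, μ i j * ((d : ℝ) * n) = m) ∧
  (∀ i, ∑ j, μ i j = ρ i)

/-- `P` is a partition of `V` into classes of sizes `ρ_i·n`. -/
def IsPartitionWithSizes {K n : ℕ} (ρ : Fin K → ℝ) (P : Fin K → Finset (Fin n)) : Prop :=
  (∀ v : Fin n, ∃! i, v ∈ P i) ∧ ∀ i, ((P i).card : ℝ) = ρ i * (n : ℝ)

/-- Kullback–Leibler divergence `D(μ‖ρ⊗ρ)`.  (Note `Real.log 0 = 0`, so the convention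
`0·ln 0 = 0` is automatic.) -/
def KLpair {K : ℕ} (μ : Fin K → Fin K → ℝ) (ρ : Fin K → ℝ) : ℝ :=
  ∑ i, ∑ j, μ i j * Real.log (μ i j / (ρ i * ρ j))

/-- Kullback–Leibler divergence of two matrices on `[K]²`. -/
def KLmat {K : ℕ} (μ ν : Fin K → Fin K → ℝ) : ℝ :=
  ∑ i, ∑ j, μ i j * Real.log (μ i j / ν i j)

/-- Entropy `H(ρ)` (convention `0·ln 0 = 0` via `Real.log 0 = 0`). -/
def Hent {K : ℕ} (ρ : Fin K → ℝ) : ℝ := -∑ i, ρ i * Real.log (ρ i)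

/-- Number of ordered partitions realizing sizes `ρ` and edge densities `μ`. -/
def Zpart (K n d : ℕ) (ρ : Fin K → ℝ) (μ : Fin K → Fin K → ℝ) (Γ : Config n d) : ℕ :=
  (univ.filter fun P : Fin K → Finset (Fin n) =>
    IsPartitionWithSizes ρ P ∧
      ∀ i j, (eConf Γ (P i) (P j) : ℝ) = μ i j * ((d : ℝ) * n)).card

def EZpart (K n d : ℕ) (ρ : Fin K → ℝ) (μ : Fin K → Fin K → ℝ) : ℝ :=
  confExp n d fun Γ => (Zpart K n d ρ μ Γ : ℝ)

/-- Number of proper colorings with class sizes `ρ_i·n`. -/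
def Zrho (n d k : ℕ) (ρ : Fin k → ℝ) (Γ : Config n d) : ℕ :=
  (univ.filter fun σ : Fin n → Fin k =>
    ProperCol Γ σ ∧ ∀ i, ((colorClass σ i).card : ℝ) = ρ i * (n : ℝ)).card

def EZrho (n d k : ℕ) (ρ : Fin k → ℝ) : ℝ :=
  confExp n d fun Γ => (Zrho n d k ρ Γ : ℝ)

/-- Number of pairs of balanced proper `k`-colorings with overlap matrix `ρ`. -/
def Zoverlap (n d k : ℕ) (ρ : Fin k → Fin k → ℝ) (Γ : Config n d) : ℕ :=
  (univ.filter fun st : (Fin n → Fin k) × (Fin n → Fin k) =>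
    BalancedCol st.1 ∧ BalancedCol st.2 ∧ ProperCol Γ st.1 ∧ ProperCol Γ st.2 ∧
      ∀ i j, overlap st.1 st.2 i j = ρ i j).card

def EZoverlap (n d k : ℕ) (ρ : Fin k → Fin k → ℝ) : ℝ :=
  confExp n d fun Γ => (Zoverlap n d k ρ Γ : ℝ)

/-- Doubly-stochastic `k×k` matrix. -/
def DStoch (k : ℕ) (ρ : Fin k → Fin k → ℝ) : Prop :=
  (∀ i j, 0 ≤ ρ i j) ∧ (∀ i, ∑ j, ρ i j = 1) ∧ (∀ j, ∑ i, ρ i j = 1)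

/-- The second-moment function
`f(ρ) = ln k − (1/k)·Σ ρ_ij ln ρ_ij + (d/2)·ln(1 − 2/k + (1/k²)·Σ ρ_ij²)`. -/
def fBethe (k d : ℕ) (ρ : Fin k → Fin k → ℝ) : ℝ :=
  Real.log k - (1 / (k : ℝ)) * ∑ i, ∑ j, ρ i j * Real.log (ρ i j) +
    ((d : ℝ) / 2) *
      Real.log (1 - 2 / (k : ℝ) + (1 / (k : ℝ) ^ 2) * ∑ i, ∑ j, (ρ i j) ^ 2)

/-- Simple `d`-regular graphs on `Fin n`, encoded as boolean adjacency matrices. -/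
def IsRegGraph (n d : ℕ) (A : Fin n → Fin n → Bool) : Prop :=
  (∀ v w, A v w = A w v) ∧ (∀ v, A v v = false) ∧
  (∀ v, (univ.filter fun w => A v w = true).card = d)

/-- Proper `k`-colorability of the graph with adjacency matrix `A`. -/
def GraphColorable (n k : ℕ) (A : Fin n → Fin n → Bool) : Prop :=
  ∃ σ : Fin n → Fin k, ∀ v w : Fin n, A v w = true → σ v ≠ σ w

/-- Probability of an event for the uniformly random simple `d`-regular graph on `n`
vertices. -/
def regProb (n d : ℕ) (p : (Fin n → Fin n → Bool) → Prop) : ℝ :=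
  ((univ.filter fun A : Fin n → Fin n → Bool => IsRegGraph n d A ∧ p A).card : ℝ) /
    ((univ.filter fun A : Fin n → Fin n → Bool => IsRegGraph n d A).card : ℝ)

/-- The event `p` holds w.h.p. for `G(n,d)`, i.e. its probability tends to `1` as `n → ∞`
along `n` with `d·n` even. -/
def WHP (d : ℕ) (p : (n : ℕ) → (Fin n → Fin n → Bool) → Prop) : Prop :=
  ∀ δ : ℝ, 0 < δ → ∃ N : ℕ, ∀ n : ℕ, N ≤ n → Even (d * n) →
    1 - δ ≤ regProb n d (p n)

/-- The chromatic number of the graph with adjacency matrix `A`. -/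
def chromNum (n : ℕ) (A : Fin n → Fin n → Bool) : ℕ :=
  sInf {k : ℕ | GraphColorable n k A}

/-- Probability that a uniformly random `s`-subset `S ⊆ U×[d]` satisfies
`|S ∩ ({v}×[d])| = t v` for all `v`. -/
def pSubset (u d s : ℕ) (t : Fin u → ℕ) : ℝ :=
  ((((univ : Finset (Fin u × Fin d)).powersetCard s).filter fun S =>
      ∀ v : Fin u, (S.filter fun x => x.1 = v).card = t v).card : ℝ) /
    (((univ : Finset (Fin u × Fin d)).powersetCard s).card : ℝ)

/-- Model for a family of `u` independent `Bin(d, s/(d·u))` variables: each clone `(v,j)`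
carries an independent uniform label in `Fin (d·u)` and is a success iff the label is `< s`;
`binCount u d s ω v` is the number of successes among the `d` clones of `v`. -/
def binCount (u d s : ℕ) (ω : Fin u × Fin d → Fin (d * u)) (v : Fin u) : ℕ :=
  (univ.filter fun j : Fin d => (ω (v, j)).1 < s).card

/-- `P[∀ v, b_v = t v]` for independent `b_v ~ Bin(d, s/(d·u))`. -/
def pBin (u d s : ℕ) (t : Fin u → ℕ) : ℝ :=
  ((univ.filter fun ω : Fin u × Fin d → Fin (d * u) =>
      ∀ v, binCount u d s ω v = t v).card : ℝ) /
    (Fintype.card (Fin u × Fin d → Fin (d * u)) : ℝ)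

/-- `P[∀ v, b_v = t v | Σ_v b_v = s]` for independent `b_v ~ Bin(d, s/(d·u))`. -/
def pBinCond (u d s : ℕ) (t : Fin u → ℕ) : ℝ :=
  ((univ.filter fun ω : Fin u × Fin d → Fin (d * u) =>
      (∀ v, binCount u d s ω v = t v) ∧ (∑ v, binCount u d s ω v) = s).card : ℝ) /
    ((univ.filter fun ω : Fin u × Fin d → Fin (d * u) =>
      (∑ v, binCount u d s ω v) = s).card : ℝ)

end RRG

end

open RRG

/-! ### Counting label-preserving bijections and labellings -/

/-- The bijections `A ≃ B` compatible with labellings of `A` and `B` whose fibres have equal sizes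
are counted by the product of the factorials of the fibre sizes. -/
lemma card_equiv_fiber {A B ι : Type*} [Finite A] [Finite B] [Fintype ι] (g₁ : A → ι)
    (g₂ : B → ι)
    (h : ∀ i, Nat.card {a // g₁ a = i} = Nat.card {b // g₂ b = i}) :
    Nat.card {e : A ≃ B // ∀ a, g₂ (e a) = g₁ a} =
      ∏ i, (Nat.card {a // g₁ a = i}).factorial := by
  let e₀ : A ≃ B := Equiv.ofFiberEquiv fun i => (Finite.card_eq.1 (h i)).some
  have h₀ : ∀ a, g₂ (e₀ a) = g₁ a := fun a => Equiv.ofFiberEquiv_map _ a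
  have h₁ : ∀ b, g₁ (e₀.symm b) = g₂ b := fun b => by
    rw [← h₀, Equiv.apply_symm_apply]
  have h₂ : Nat.card {g : Equiv.Perm A // g₁ ∘ g = g₁} =
      ∏ i, (Nat.card {a // g₁ a = i}).factorial := by
    have := Fintype.ofFinite A
    simp only [Nat.card_eq_fintype_card]
    exact DomMulAct.stabilizer_card g₁
  rw [← h₂]
  refine Nat.card_congr
    ⟨fun e => ⟨e.1.trans e₀.symm, ?_⟩, fun g => ⟨g.1.trans e₀, ?_⟩, ?_, ?_⟩
  · funext a
    simp [h₁, e.2]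
  · intro a
    have := congrFun g.2 a
    simpa [h₀] using this
  · intro e
    ext a
    simp
  · intro g
    ext a
    simp

/-- Number of second labels `f` having `m i j` points of first label `i` and second label `j`.
Bijections of `X` with the model `Σ (i, j), Fin (m i j)` that respect the first label are counted
directly, and again by sorting them according to the second label that they induce. -/
lemma card_fun_pattern {X κ ι : Type*} [Finite X] [Fintype κ] [Fintype ι] (c : X → κ)
    (m : κ → ι → ℕ) (hm : ∀ i, ∑ j, m i j = Nat.card {x // c x = i}) :
    Nat.card {f : X → ι // ∀ i j, Nat.card {x // c x = i ∧ f x = j} = m i j} *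
      ∏ i, ∏ j, (m i j).factorial = ∏ i, (Nat.card {x // c x = i}).factorial := by
  let Y := Σ p : κ × ι, Fin (m p.1 p.2)
  have hY : ∀ p : κ × ι, Nat.card {y : Y // y.1 = p} = m p.1 p.2 := by
    intro p
    rw [Nat.card_congr (Equiv.sigmaSubtype p)]
    simp
  have hY1 : ∀ i, Nat.card {y : Y // y.1.1 = i} = ∑ j, m i j := by
    intro i
    have e : {y : Y // y.1.1 = i} ≃ Σ j, Fin (m i j) :=
      { toFun := fun y => ⟨y.1.1.2, Fin.cast (by rw [y.2]) y.1.2⟩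
        invFun := fun z => ⟨⟨(i, z.1), z.2⟩, rfl⟩
        left_inv := by
          rintro ⟨⟨⟨a, b⟩, k⟩, h⟩
          dsimp at h
          subst h
          rfl
        right_inv := fun z => rfl }
    rw [Nat.card_congr e, Nat.card_sigma]
    simp
  have h1 := card_equiv_fiber c (fun y : Y => y.1.1) (fun i => by rw [hY1, hm])
  have hfib : ∀ f : X → ι, ∀ p : κ × ι, Nat.card {x // (c x, f x) = p} =
      Nat.card {x // c x = p.1 ∧ f x = p.2} := by
    intro f p
    exact Nat.card_congr (Equiv.subtypeEquivRight fun x => Prod.mk_inj)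
  have h2 : ∀ f : {f : X → ι // ∀ i j, Nat.card {x // c x = i ∧ f x = j} = m i j},
      Nat.card {e : X ≃ Y // ∀ x, (e x).1 = (c x, f.1 x)} =
      ∏ i, ∏ j, (m i j).factorial := by
    intro f
    rw [card_equiv_fiber (fun x => (c x, f.1 x)) (fun y : Y => y.1)
      (fun p => by rw [hY, ← f.2, ← hfib])]
    rw [← Fintype.prod_prod_type']
    refine Finset.prod_congr rfl fun p _ => ?_
    rw [← f.2, ← hfib]
  rw [← h1]
  have h3 : {e : X ≃ Y // ∀ x, (e x).1.1 = c x} ≃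
      Σ f : {f : X → ι // ∀ i j, Nat.card {x // c x = i ∧ f x = j} = m i j},
        {e : X ≃ Y // ∀ x, (e x).1 = (c x, f.1 x)} :=
    { toFun := fun e => ⟨⟨fun x => (e.1 x).1.2, by
          intro i j
          rw [← hY (i, j), ← hfib _ (i, j)]
          refine Nat.card_congr (Equiv.subtypeEquiv e.1 fun x => ?_)
          rw [← e.2 x]⟩, ⟨e.1, fun x => by rw [← e.2 x]⟩⟩
      invFun := fun p => ⟨p.2.1, fun x => by rw [p.2.2 x]⟩
      left_inv := fun e => rfl
      right_inv := by
        rintro ⟨⟨f, hf⟩, ⟨e, he⟩⟩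
        have : f = fun x => (e x).1.2 := by funext x; rw [he x]
        subst this
        rfl }
  have := Fintype.ofFinite {f : X → ι // ∀ i j, Nat.card {x // c x = i ∧ f x = j} = m i j}
  rw [Nat.card_congr h3, Nat.card_sigma]
  simp [h2]

/-! ### Counting involutions with a prescribed label pattern -/

/-- Involutions `Γ` with `c ∘ Γ = f` for a given `f`. Such a `Γ` exchanges `{c < f}` and `{f < c}`,
and is determined by its restriction to the first set, a bijection onto the second that swaps the
labels `c` and `f`. -/
lemma card_invol_of_labels {X ι : Type*} [Finite X] [Fintype ι] [LinearOrder ι]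
    (c f : X → ι) (m : ι → ι → ℕ) (hsymm : ∀ i j, m i j = m j i) (hdiag : ∀ i, m i i = 0)
    (hf : ∀ i j, Nat.card {x // c x = i ∧ f x = j} = m i j) :
    Nat.card {Γ : X → X // (∀ x, Γ (Γ x) = x) ∧ ∀ x, c (Γ x) = f x} =
      ∏ i, ∏ j, (if i < j then m i j else 0).factorial := by
  have hne : ∀ x, c x ≠ f x := by
    intro x hx
    have h := hf (c x) (c x)
    rw [hdiag, Nat.card_eq_zero] at h
    rcases h with h | h
    · exact h.elim ⟨x, rfl, hx.symm⟩
    · exact (h.not_finite inferInstance).elim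
  have hlt : ∀ x, ¬ c x < f x → f x < c x := fun x h => lt_of_le_of_ne (not_lt.1 h) (hne x).symm
  let A := {x // c x < f x}
  let B := {x // f x < c x}
  have hA : ∀ p : ι × ι, Nat.card {a : A // (c a.1, f a.1) = p} =
      if p.1 < p.2 then m p.1 p.2 else 0 := by
    rintro ⟨i, j⟩
    split_ifs with h
    · rw [← hf]
      refine Nat.card_congr ⟨fun a => ⟨a.1.1, Prod.mk_inj.1 a.2⟩,
        fun x => ⟨⟨x.1, by rw [x.2.1, x.2.2]; exact h⟩, Prod.mk_inj.2 x.2⟩,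
        fun _ => rfl, fun _ => rfl⟩
    · have : IsEmpty {a : A // (c a.1, f a.1) = (i, j)} := ⟨fun a => h (by
        have h1 := Prod.mk_inj.1 a.2
        have h2 := a.1.2
        rw [h1.1, h1.2] at h2
        exact h2)⟩
      exact Nat.card_of_isEmpty
  have hB : ∀ p : ι × ι, Nat.card {b : B // (f b.1, c b.1) = p} =
      if p.1 < p.2 then m p.1 p.2 else 0 := by
    rintro ⟨i, j⟩
    split_ifs with h
    · rw [hsymm, ← hf]
      refine Nat.card_congr ⟨fun a => ⟨a.1.1, (Prod.mk_inj.1 a.2).symm⟩,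
        fun x => ⟨⟨x.1, by rw [x.2.1, x.2.2]; exact h⟩, Prod.mk_inj.2 x.2.symm⟩,
        fun _ => rfl, fun _ => rfl⟩
    · have : IsEmpty {a : B // (f a.1, c a.1) = (i, j)} := ⟨fun a => h (by
        have h1 := Prod.mk_inj.1 a.2
        have h2 := a.1.2
        rw [h1.1, h1.2] at h2
        exact h2)⟩
      exact Nat.card_of_isEmpty
  have key := card_equiv_fiber (fun a : A => (c a.1, f a.1)) (fun b : B => (f b.1, c b.1))
    (fun p => by rw [hA, hB])
  simp only [hA] at key
  rw [← Fintype.prod_prod_type' fun i j => (if i < j then m i j else 0).factorial, ← key]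
  have hΓ : ∀ Γ : {Γ : X → X // (∀ x, Γ (Γ x) = x) ∧ ∀ x, c (Γ x) = f x}, ∀ x,
      f (Γ.1 x) = c x := fun Γ x => by rw [← Γ.2.2, Γ.2.1]
  refine Nat.card_congr
    { toFun := fun Γ => ⟨⟨fun a => ⟨Γ.1 a.1, by rw [hΓ, Γ.2.2]; exact a.2⟩,
          fun b => ⟨Γ.1 b.1, by rw [hΓ, Γ.2.2]; exact b.2⟩,
          fun a => Subtype.ext (Γ.2.1 _), fun a => Subtype.ext (Γ.2.1 _)⟩,
          fun a => by
            change (f (Γ.1 a.1), c (Γ.1 a.1)) = _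
            rw [hΓ, Γ.2.2]⟩
      invFun := fun e => ⟨fun x => if h : c x < f x then (e.1 ⟨x, h⟩).1
          else (e.1.symm ⟨x, hlt x h⟩).1, ?_, ?_⟩
      left_inv := ?_
      right_inv := ?_ }
  · intro x
    by_cases h : c x < f x
    · have h' : ¬ c (e.1 ⟨x, h⟩).1 < f (e.1 ⟨x, h⟩).1 := not_lt.2 (e.1 ⟨x, h⟩).2.le
      simp [h, h']
    · have h' := (e.1.symm ⟨x, hlt x h⟩).2
      simp [h, h']
  · intro x
    by_cases h : c x < f x
    · have := e.2 ⟨x, h⟩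
      simp only [h, dite_true]
      exact (Prod.mk_inj.1 this).2
    · have := e.2 (e.1.symm ⟨x, hlt x h⟩)
      rw [Equiv.apply_symm_apply] at this
      simp only [h, dite_false]
      exact (Prod.mk_inj.1 this).1.symm
  · intro Γ
    apply Subtype.ext
    funext x
    by_cases h : c x < f x
    · simp [h]
    · simp [h]
  · intro e
    apply Subtype.ext
    ext a
    simp [a.2]

/-- Involutions with `m i j` points of label `i` whose partner has label `j`: the count is over
the partner labels first, and then over the involutions realizing them. -/
lemma card_invol_pattern {X ι : Type*} [Finite X] [Fintype ι] [LinearOrder ι]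
    (c : X → ι) (m : ι → ι → ℕ) (hsymm : ∀ i j, m i j = m j i) (hdiag : ∀ i, m i i = 0)
    (hm : ∀ i, ∑ j, m i j = Nat.card {x // c x = i}) :
    Nat.card {Γ : X → X // (∀ x, Γ (Γ x) = x) ∧
        ∀ i j, Nat.card {x // c x = i ∧ c (Γ x) = j} = m i j} *
      ∏ i, ∏ j, (m i j).factorial =
    (∏ i, (Nat.card {x // c x = i}).factorial) *
      ∏ i, ∏ j, (if i < j then m i j else 0).factorial := by
  have e : {Γ : X → X // (∀ x, Γ (Γ x) = x) ∧
        ∀ i j, Nat.card {x // c x = i ∧ c (Γ x) = j} = m i j} ≃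
      Σ f : {f : X → ι // ∀ i j, Nat.card {x // c x = i ∧ f x = j} = m i j},
        {Γ : X → X // (∀ x, Γ (Γ x) = x) ∧ ∀ x, c (Γ x) = f.1 x} :=
    { toFun := fun Γ => ⟨⟨fun x => c (Γ.1 x), Γ.2.2⟩, ⟨Γ.1, Γ.2.1, fun _ => rfl⟩⟩
      invFun := fun p => ⟨p.2.1, p.2.2.1, by simpa only [p.2.2.2] using p.1.2⟩
      left_inv := fun _ => rfl
      right_inv := by
        rintro ⟨⟨f, hf⟩, ⟨Γ, h1, h2⟩⟩
        have : f = fun x => c (Γ x) := by funext x; rw [h2 x]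
        subst this
        rfl }
  have := Fintype.ofFinite {f : X → ι // ∀ i j, Nat.card {x // c x = i ∧ f x = j} = m i j}
  rw [Nat.card_congr e, Nat.card_sigma]
  simp only [fun f : {f : X → ι // ∀ i j, Nat.card {x // c x = i ∧ f x = j} = m i j} =>
    card_invol_of_labels c f.1 m hsymm hdiag f.2]
  rw [← card_fun_pattern c m hm]
  simp only [Finset.sum_const, Finset.card_univ, smul_eq_mul, Nat.card_eq_fintype_card]
  ring

/-- A set of even size `N` has `N! / (2 ^ (N / 2) * (N / 2)!)` fixed-point-free involutions: they are
the permutations of cycle type `2 + ⋯ + 2`. -/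
lemma card_matching (X : Type*) [Fintype X] (hX : Even (Fintype.card X)) :
    Nat.card {Γ : X → X // (∀ x, Γ (Γ x) = x) ∧ ∀ x, Γ x ≠ x} *
      (2 ^ (Fintype.card X / 2) * (Fintype.card X / 2).factorial) =
    (Fintype.card X).factorial := by
  set h := Fintype.card X / 2 with hh
  have h2 : h * 2 = Fintype.card X := Nat.div_mul_cancel hX.two_dvd
  have key := Equiv.Perm.card_of_cycleType_mul_eq X (Multiset.replicate h 2)
  rw [Multiset.sum_replicate, Multiset.prod_replicate, smul_eq_mul, h2] at key
  have hb : ∏ n ∈ (Multiset.replicate h 2).toFinset,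
      ((Multiset.replicate h 2).count n).factorial = h.factorial := by
    rcases Nat.eq_zero_or_pos h with h0 | h0
    · simp [h0]
    · rw [Multiset.toFinset_replicate, if_neg h0.ne']
      simp
  rw [if_pos ⟨le_rfl, fun a ha => (Multiset.eq_of_mem_replicate ha).ge⟩, hb] at key
  rw [← key]
  simp only [Nat.sub_self, Nat.factorial_zero, one_mul]
  congr 1
  rw [← Fintype.card_coe, ← Nat.card_eq_fintype_card]
  have hiff : ∀ g : Equiv.Perm X, g.cycleType = Multiset.replicate h 2 ↔
      (∀ x, g (g x) = x) ∧ ∀ x, g x ≠ x := by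
    intro g
    constructor
    · intro hg
      constructor
      · have h1 : orderOf g ∣ 2 := by
          rw [← Equiv.Perm.lcm_cycleType, hg, Multiset.lcm_dvd]
          intro b hb
          rw [Multiset.eq_of_mem_replicate hb]
        have h3 := orderOf_dvd_iff_pow_eq_one.1 h1
        intro x
        rw [← Equiv.Perm.mul_apply, ← sq, h3, Equiv.Perm.one_apply]
      · have h1 : g.support = univ := by
          rw [← Finset.card_eq_iff_eq_univ, ← Equiv.Perm.sum_cycleType, hg,
            Multiset.sum_replicate, smul_eq_mul, h2]
        intro x
        rw [← Equiv.Perm.mem_support, h1]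
        exact mem_univ x
    · rintro ⟨h1, h3⟩
      have h4 : g.support = univ := by
        ext x
        simp [h3 x]
      have h5 : g ^ 2 = 1 := by
        ext x
        simp [sq, h1]
      have : Fact (Nat.Prime 2) := ⟨Nat.prime_two⟩
      have h6 := Equiv.Perm.cycleType_of_pow_prime_eq_one h5
      have h7 := Equiv.Perm.sum_cycleType g
      rw [h6, h4, Multiset.sum_replicate, smul_eq_mul, Finset.card_univ, ← h2] at h7
      rw [h6, Nat.eq_of_mul_eq_mul_right two_pos h7]
  refine Nat.card_congr
    ⟨fun Γ => ⟨Function.Involutive.toPerm Γ.1 Γ.2.1, ?_⟩, fun g => ⟨g.1, ?_⟩, ?_, ?_⟩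
  · rw [mem_filter, hiff]
    exact ⟨mem_univ _, Γ.2⟩
  · exact (hiff _).1 (mem_filter.1 g.2).2
  · intro Γ; rfl
  · intro g
    ext x
    rfl

/-! ### Stirling estimates and the rate function -/

/-- At `k = 0` both bounds hold because `Real.log 0 = 0`. -/
lemma log_factorial_bounds (k : ℕ) :
    (k : ℝ) * Real.log k - k ≤ Real.log (k.factorial : ℝ) ∧
      Real.log (k.factorial : ℝ) ≤ (k : ℝ) * Real.log k - k + (Real.log k + 1) := by
  induction k with
  | zero => simp
  | succ k ih =>
    have hf : Real.log ((k + 1).factorial : ℝ) =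
        Real.log ((k + 1 : ℕ) : ℝ) + Real.log (k.factorial : ℝ) := by
      rw [Nat.factorial_succ, Nat.cast_mul, Real.log_mul (by positivity) (by positivity)]
    rw [hf]
    rcases Nat.eq_zero_or_pos k with rfl | hk
    · simp
    have hk' : (0 : ℝ) < k := by exact_mod_cast hk
    have hk1 : (0 : ℝ) < (k : ℝ) + 1 := by positivity
    have h1 : (k : ℝ) * (Real.log (k + 1) - Real.log k) ≤ 1 := by
      rw [← Real.log_div hk1.ne' hk'.ne']
      have := Real.log_le_sub_one_of_pos (div_pos hk1 hk')
      calc (k : ℝ) * Real.log ((k + 1) / k) ≤ k * ((k + 1) / k - 1) := by gcongr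
        _ = 1 := by field_simp; ring
    have h2 : 1 ≤ ((k : ℝ) + 1) * (Real.log (k + 1) - Real.log k) := by
      have h3 := Real.log_le_sub_one_of_pos (div_pos hk' hk1)
      rw [Real.log_div hk'.ne' hk1.ne'] at h3
      have : (k : ℝ) / (k + 1) - 1 = - (1 / (k + 1)) := by field_simp; ring
      rw [this] at h3
      have h4 : 1 / ((k : ℝ) + 1) ≤ Real.log (k + 1) - Real.log k := by linarith
      rw [div_le_iff₀ hk1] at h4
      linarith
    push_cast
    constructor <;> nlinarith [ih.1, ih.2]

/-- The leading Stirling term `x ln x − x` of `ln x!`. -/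
noncomputable def stir (x : ℝ) : ℝ := x * Real.log x - x

lemma stir_mul (a b : ℝ) (hb : b ≠ 0) :
    stir (a * b) = b * (a * Real.log a) + a * (b * Real.log b) - a * b := by
  unfold stir
  rcases eq_or_ne a 0 with rfl | ha
  · simp
  · rw [Real.log_mul ha hb]; ring

lemma log_factorial_approx {k : ℕ} {N : ℕ} (hkN : k ≤ N) :
    |Real.log (k.factorial : ℝ) - stir k| ≤ Real.log N + 1 := by
  obtain ⟨h1, h2⟩ := log_factorial_bounds k
  have h0 : Real.log k ≤ Real.log N := by
    rcases Nat.eq_zero_or_pos k with rfl | hk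
    · simpa using Real.log_natCast_nonneg N
    · exact Real.log_le_log (by exact_mod_cast hk) (by exact_mod_cast hkN)
  have h3 := Real.log_natCast_nonneg N
  unfold stir
  rw [abs_le]
  constructor <;> linarith

/-- The logarithm in the divergence splits term by term: where `μ i j > 0`, all of `ρ i`, `ρ j` and
`1 - Σ ρ_l²` are positive, and elsewhere both sides vanish whatever the logarithms are. -/
lemma KL_term {K : ℕ} (ρ : Fin K → ℝ) (μ : Fin K → Fin K → ℝ) (hρ : ∀ i, 0 ≤ ρ i)
    (hρ1 : ∑ i, ρ i = 1) (hμ : ∀ i j, 0 ≤ μ i j) (hsymm : ∀ i j, μ i j = μ j i)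
    (hrow : ∀ i, ∑ j, μ i j = ρ i) (hdiag : ∀ i, μ i i = 0) (i j : Fin K) :
    μ i j * Real.log (μ i j / (if i = j then 0 else ρ i * ρ j / (1 - ∑ l, (ρ l) ^ 2))) =
      μ i j * Real.log (μ i j) - μ i j * Real.log (ρ i) - μ i j * Real.log (ρ j) +
        μ i j * Real.log (1 - ∑ l, (ρ l) ^ 2) := by
  rcases eq_or_ne i j with rfl | hij
  · simp [hdiag]
  rcases (hμ i j).eq_or_lt with h0 | h0
  · simp [← h0]
  have hle : ∀ i j, μ i j ≤ ρ i := fun i j => by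
    rw [← hrow i]
    exact single_le_sum (f := fun j => μ i j) (fun j _ => hμ i j) (mem_univ j)
  have hi : 0 < ρ i := h0.trans_le (hle i j)
  have hj : 0 < ρ j := h0.trans_le (by rw [hsymm]; exact hle j i)
  have hsum : ρ i + ρ j ≤ 1 := by
    rw [← hρ1, ← sum_pair hij]
    exact sum_le_sum_of_subset_of_nonneg (subset_univ _) fun k _ _ => hρ k
  have h1 : ∀ l, ρ l ≤ 1 := fun l => by
    rw [← hρ1]
    exact single_le_sum (fun j _ => hρ j) (mem_univ l)
  have hs : 0 < 1 - ∑ l, (ρ l) ^ 2 := by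
    have : 1 - ∑ l, (ρ l) ^ 2 = ∑ l, ρ l * (1 - ρ l) := by
      rw [← hρ1, ← sum_sub_distrib]
      rw [hρ1]
      exact sum_congr rfl fun l _ => by ring
    rw [this]
    refine lt_of_lt_of_le (b := ρ i * (1 - ρ i)) (mul_pos hi (by linarith)) ?_
    exact single_le_sum (f := fun l => ρ l * (1 - ρ l))
      (fun l _ => mul_nonneg (hρ l) (by linarith [h1 l])) (mem_univ i)
  rw [if_neg hij, Real.log_div h0.ne' (by positivity), Real.log_div (by positivity) hs.ne',
    Real.log_mul hi.ne' hj.ne']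
  ring

/-- The exponential rate, multiplied by `n`, is exactly the combination of Stirling main terms. -/
lemma rate_eq {K d n : ℕ} (hn : 0 < n) (hd : 0 < d) (ρ : Fin K → ℝ) (μ : Fin K → Fin K → ℝ)
    (hρ : ∀ i, 0 ≤ ρ i)
    (hρ1 : ∑ i, ρ i = 1) (hμ : ∀ i j, 0 ≤ μ i j) (hsymm : ∀ i j, μ i j = μ j i)
    (hrow : ∀ i, ∑ j, μ i j = ρ i) (hdiag : ∀ i, μ i i = 0) :
    (n : ℝ) * (-(∑ i, ρ i * Real.log (ρ i)) +
        ((d : ℝ) / 2) * Real.log (1 - ∑ l, (ρ l) ^ 2) - ((d : ℝ) / 2) *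
          ∑ i, ∑ j, μ i j *
            Real.log (μ i j / (if i = j then 0 else ρ i * ρ j / (1 - ∑ l, (ρ l) ^ 2)))) =
      stir n - ∑ i, stir (ρ i * n) + ∑ i, stir (ρ i * (d * n)) -
        (1 / 2) * ∑ i, ∑ j, stir (μ i j * (d * n)) -
        (stir (d * n) - (d * n / 2) * Real.log 2 - stir (1 / 2 * (d * n))) := by
  have hn' : (n : ℝ) ≠ 0 := by positivity
  have hd' : (d : ℝ) ≠ 0 := by positivity
  have hdn : (d : ℝ) * n ≠ 0 := mul_ne_zero hd' hn'
  simp only [KL_term ρ μ hρ hρ1 hμ hsymm hrow hdiag]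
  simp only [stir_mul _ _ hdn, stir_mul _ _ hn']
  have hcol : ∀ j, ∑ i, μ i j = ρ j := fun j => by
    rw [← hrow j]; exact sum_congr rfl fun i _ => hsymm i j
  have e1 : ∑ i, ∑ j, μ i j * Real.log (ρ i) = ∑ i, ρ i * Real.log (ρ i) := by
    simp only [← sum_mul, hrow]
  have e2 : ∑ i, ∑ j, μ i j * Real.log (ρ j) = ∑ i, ρ i * Real.log (ρ i) := by
    rw [sum_comm]
    simp only [← sum_mul, hcol]
  simp only [sum_add_distrib, sum_sub_distrib, ← mul_sum, ← sum_mul, hrow, hρ1, e2]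
  simp only [stir, one_div, Real.log_inv, Real.log_mul hd' hn']
  ring

/-! ### The expectation in closed form -/

/-- Ordered partitions correspond to maps `Fin n → Fin K` with fibres of size `a i`. -/
lemma card_partitions {K n : ℕ} (ρ : Fin K → ℝ) (a : Fin K → ℕ)
    (ha : ∀ i, ρ i * (n : ℝ) = a i) (hsum : ∑ i, a i = n) :
    Nat.card {P : Fin K → Finset (Fin n) // IsPartitionWithSizes ρ P} *
      ∏ i, (a i).factorial = n.factorial := by
  have key := card_fun_pattern (fun _ : Fin n => ()) (fun _ i => a i) (fun _ => by simp [hsum])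
  simp only [univ_unique, prod_singleton, Nat.card_eq_fintype_card] at key
  simp only [true_and, forall_const, Fintype.card_subtype_true, Fintype.card_fin] at key
  rw [← key]
  congr 1
  rw [← Nat.card_eq_fintype_card]
  let F : {f : Fin n → Fin K // ∀ i, Fintype.card {x // f x = i} = a i} →
      {P : Fin K → Finset (Fin n) // IsPartitionWithSizes ρ P} := fun f =>
    ⟨fun i => univ.filter fun v => f.1 v = i,
      fun v => ⟨f.1 v, by simp, fun i hi => by simpa [eq_comm] using hi⟩,
      fun i => by rw [ha, ← f.2 i, Fintype.card_subtype]⟩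
  refine (Nat.card_congr (Equiv.ofBijective F ⟨fun f g hfg => ?_, fun P => ?_⟩)).symm
  · apply Subtype.ext
    funext v
    have h : v ∈ (F f).1 (f.1 v) := by simp [F]
    rw [hfg] at h
    simpa [F, eq_comm] using h
  · choose c hc hc' using P.2.1
    have hmem : ∀ v i, c v = i ↔ v ∈ P.1 i := fun v i =>
      ⟨fun h => h ▸ hc v, fun h => (hc' v i h).symm⟩
    refine ⟨⟨c, fun i => ?_⟩, ?_⟩
    · have h := P.2.2 i
      rw [ha] at h
      rw [Fintype.card_subtype]
      simp only [hmem, filter_univ_mem]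
      exact_mod_cast h
    · apply Subtype.ext
      funext i
      ext v
      simp [F, hmem]

/-- Configurations realizing the prescribed edge counts for a fixed partition. The number does not
depend on the partition. -/
lemma card_matched {K d n : ℕ} (ρ : Fin K → ℝ) (μ : Fin K → Fin K → ℝ) (a : Fin K → ℕ)
    (m : Fin K → Fin K → ℕ) (ha : ∀ i, ρ i * (n : ℝ) = a i)
    (hm : ∀ i j, μ i j * ((d : ℝ) * n) = m i j) (hsymm : ∀ i j, m i j = m j i)
    (hdiag : ∀ i, m i i = 0) (hrow : ∀ i, ∑ j, m i j = a i * d)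
    (P : Fin K → Finset (Fin n)) (hP : IsPartitionWithSizes ρ P) :
    Nat.card {Γ : Config n d // ∀ i j, (eConf Γ (P i) (P j) : ℝ) = μ i j * ((d : ℝ) * n)} *
      ∏ i, ∏ j, (m i j).factorial =
    (∏ i, (a i * d).factorial) * ∏ i, ∏ j, (if i < j then m i j else 0).factorial := by
  choose c hc hc' using hP.1
  have hmem : ∀ v i, v ∈ P i ↔ c v = i := fun v i =>
    ⟨fun h => (hc' v i h).symm, fun h => h ▸ hc v⟩
  have hcard : ∀ i, Nat.card {x : Fin n × Fin d // c x.1 = i} = a i * d := by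
    intro i
    have h : (P i).card = a i := by
      have := hP.2 i
      rw [ha] at this
      exact_mod_cast this
    rw [← h, Nat.card_eq_fintype_card, Fintype.card_subtype]
    have : (univ.filter fun x : Fin n × Fin d => c x.1 = i) = P i ×ˢ univ := by
      ext x
      simp [hmem]
    rw [this, card_product]
    simp
  have key := card_invol_pattern (fun x : Fin n × Fin d => c x.1) m hsymm hdiag
    (fun i => by rw [hrow, hcard])
  simp only [hcard] at key
  rw [← key]
  congr 1
  have hec : ∀ (Γ : Config n d) i j, eConf Γ (P i) (P j) =
      Nat.card {x : Fin n × Fin d // c x.1 = i ∧ c (Γ.1 x).1 = j} := by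
    intro Γ i j
    rw [Nat.card_eq_fintype_card, Fintype.card_subtype, eConf]
    simp only [hmem]
  refine Nat.card_congr
    { toFun := fun Γ => ⟨Γ.1.1, Γ.1.2.1, fun i j => ?_⟩
      invFun := fun Γ => ⟨⟨Γ.1, Γ.2.1, fun x hx => ?_⟩, fun i j => ?_⟩
      left_inv := fun _ => rfl
      right_inv := fun _ => rfl }
  · rw [← hec]
    have := Γ.2 i j
    rw [hm] at this
    exact_mod_cast this
  · have h := Γ.2.2 (c x.1) (c x.1)
    rw [hdiag, Nat.card_eq_zero] at h
    rcases h with h | h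
    · exact h.elim ⟨x, rfl, by rw [hx]⟩
    · exact (h.not_finite inferInstance).elim
  · refine (congrArg (Nat.cast (R := ℝ)) (hec _ i j)).trans ?_
    rw [hm]
    exact_mod_cast Γ.2.2 i j

/-- Linearity of expectation, as a double count of matching pairs of a configuration and a
partition. -/
lemma sum_Zpart {K d n : ℕ} (ρ : Fin K → ℝ) (μ : Fin K → Fin K → ℝ) (M : ℕ)
    (hM : ∀ P : Fin K → Finset (Fin n), IsPartitionWithSizes ρ P →
      Nat.card {Γ : Config n d // ∀ i j, (eConf Γ (P i) (P j) : ℝ) = μ i j * ((d : ℝ) * n)} = M) :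
    ∑ Γ : Config n d, Zpart K n d ρ μ Γ =
      Nat.card {P : Fin K → Finset (Fin n) // IsPartitionWithSizes ρ P} * M := by
  have h := sum_card_bipartiteAbove_eq_sum_card_bipartiteBelow
    (s := (univ : Finset (Config n d)))
    (t := (univ : Finset (Fin K → Finset (Fin n))).filter (IsPartitionWithSizes ρ))
    (fun Γ P => ∀ i j, (eConf Γ (P i) (P j) : ℝ) = μ i j * ((d : ℝ) * n))
  simp only [bipartiteAbove, bipartiteBelow, filter_filter] at h
  unfold Zpart
  rw [h, sum_congr rfl (g := fun _ => M), sum_const, smul_eq_mul, Nat.card_eq_fintype_card,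
    Fintype.card_subtype]
  intro P hP
  rw [← hM P (mem_filter.1 hP).2, Nat.card_eq_fintype_card, Fintype.card_subtype]

lemma log_EZpart {K d n : ℕ} (hdn : Even (d * n))
    (ρ : Fin K → ℝ) (μ : Fin K → Fin K → ℝ) (a : Fin K → ℕ)
    (m : Fin K → Fin K → ℕ) (ha : ∀ i, ρ i * (n : ℝ) = a i) (hsum : ∑ i, a i = n)
    (hm : ∀ i j, μ i j * ((d : ℝ) * n) = m i j) (hsymm : ∀ i j, m i j = m j i)
    (hdiag : ∀ i, m i i = 0) (hrow : ∀ i, ∑ j, m i j = a i * d) :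
    Real.log (EZpart K n d ρ μ) =
      Real.log (n.factorial : ℝ) - ∑ i, Real.log ((a i).factorial : ℝ) +
        ∑ i, Real.log ((a i * d).factorial : ℝ) -
        (1 / 2) * ∑ i, ∑ j, Real.log ((m i j).factorial : ℝ) -
        (Real.log ((d * n).factorial : ℝ) - (d * n / 2) * Real.log 2 -
          Real.log ((d * n / 2).factorial : ℝ)) := by
  set N₁ := Nat.card {P : Fin K → Finset (Fin n) // IsPartitionWithSizes ρ P} with hN₁
  have e1 : N₁ * ∏ i, (a i).factorial = n.factorial := card_partitions ρ a ha hsum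
  have hN₁pos : 0 < N₁ := Nat.pos_of_ne_zero fun h => by
    rw [h, zero_mul] at e1; exact (Nat.factorial_pos n).ne e1
  obtain ⟨⟨P₀, hP₀⟩⟩ : Nonempty {P : Fin K → Finset (Fin n) // IsPartitionWithSizes ρ P} :=
    (Nat.card_pos_iff.1 hN₁pos).1
  have hmatch := card_matched ρ μ a m ha hm hsymm hdiag hrow
  set M := Nat.card {Γ : Config n d //
    ∀ i j, (eConf Γ (P₀ i) (P₀ j) : ℝ) = μ i j * ((d : ℝ) * n)} with hM
  have e2 := hmatch P₀ hP₀
  rw [← hM] at e2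
  have hpos : 0 < ∏ i, ∏ j, (m i j).factorial :=
    prod_pos fun i _ => prod_pos fun j _ => Nat.factorial_pos _
  have e3 := sum_Zpart ρ μ M (fun P hP =>
    Nat.eq_of_mul_eq_mul_right hpos ((hmatch P hP).trans e2.symm))
  have e4 := card_matching (Fin n × Fin d) (by simpa [mul_comm] using hdn)
  have hX : Fintype.card (Fin n × Fin d) = d * n := by simp [mul_comm]
  rw [hX] at e4
  set N₂ := Nat.card {Γ : Fin n × Fin d → Fin n × Fin d // (∀ x, Γ (Γ x) = x) ∧ ∀ x, Γ x ≠ x}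
    with hN₂
  have hN₂' : Fintype.card (Config n d) = N₂ := by
    rw [← Nat.card_eq_fintype_card]; rfl
  have hMpos : 0 < M := Nat.pos_of_ne_zero fun h => by
    rw [h, zero_mul] at e2
    exact (Nat.mul_pos (prod_pos fun i _ => Nat.factorial_pos _)
      (prod_pos fun i _ => prod_pos fun j _ => Nat.factorial_pos _)).ne e2
  have hN₂pos : 0 < N₂ := Nat.pos_of_ne_zero fun h => by
    rw [h, zero_mul] at e4; exact (Nat.factorial_pos _).ne e4
  have hEZ : EZpart K n d ρ μ = (N₁ : ℝ) * M / N₂ := by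
    unfold EZpart confExp
    rw [hN₂', ← Nat.cast_sum, e3]
    push_cast
    rfl
  have c1 : (N₁ : ℝ) ≠ 0 := by positivity
  have c2 : (M : ℝ) ≠ 0 := by positivity
  have c3 : (N₂ : ℝ) ≠ 0 := by positivity
  have hfac : ∀ k : ℕ, (k.factorial : ℝ) ≠ 0 := fun k => by positivity
  have l1 := congrArg (fun k : ℕ => Real.log (k : ℝ)) e1
  have l2 := congrArg (fun k : ℕ => Real.log (k : ℝ)) e2
  have l4 := congrArg (fun k : ℕ => Real.log (k : ℝ)) e4
  simp only [Nat.cast_mul, Nat.cast_prod, Nat.cast_pow] at l1 l2 l4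
  rw [Real.log_mul c1 (prod_ne_zero_iff.2 fun i _ => hfac _),
    Real.log_prod fun i _ => hfac _] at l1
  have hprod : ∀ g : Fin K → Fin K → ℕ,
      Real.log (∏ i, ∏ j, ((g i j).factorial : ℝ)) =
        ∑ i, ∑ j, Real.log ((g i j).factorial : ℝ) := by
    intro g
    rw [Real.log_prod fun i _ => prod_ne_zero_iff.2 fun j _ => hfac _]
    exact sum_congr rfl fun i _ => Real.log_prod fun j _ => hfac _
  have hprod0 : ∀ g : Fin K → Fin K → ℕ, (∏ i, ∏ j, ((g i j).factorial : ℝ)) ≠ 0 := fun g =>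
    prod_ne_zero_iff.2 fun i _ => prod_ne_zero_iff.2 fun j _ => hfac _
  rw [Real.log_mul c2 (hprod0 m),
    Real.log_mul (prod_ne_zero_iff.2 fun i _ => hfac _)
      (hprod0 fun i j => if i < j then m i j else 0),
    hprod m, hprod fun i j => if i < j then m i j else 0, Real.log_prod fun i _ => hfac _] at l2
  rw [Real.log_mul c3 (mul_ne_zero (by positivity) (hfac _)),
    Real.log_mul (by positivity) (hfac _), Real.log_pow] at l4
  -- By symmetry the pairs above the diagonal carry exactly half of the total.
  have hhalf : ∑ i, ∑ j, Real.log ((m i j).factorial : ℝ) =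
      2 * ∑ i, ∑ j, Real.log (((if i < j then m i j else 0).factorial : ℕ) : ℝ) := by
    have hsw : ∑ i, ∑ j, Real.log (((if i < j then m i j else 0).factorial : ℕ) : ℝ) =
        ∑ i, ∑ j, Real.log (((if j < i then m i j else 0).factorial : ℕ) : ℝ) := by
      rw [sum_comm]
      exact sum_congr rfl fun i _ => sum_congr rfl fun j _ => by rw [hsymm]
    rw [two_mul]
    nth_rewrite 2 [hsw]
    rw [← sum_add_distrib]
    refine sum_congr rfl fun i _ => ?_
    rw [← sum_add_distrib]
    refine sum_congr rfl fun j _ => ?_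
    rcases lt_trichotomy i j with h | h | h
    · simp [h, h.not_gt]
    · subst h; simp [hdiag]
    · simp [h, h.not_gt]
  have hhalfN : ((d * n / 2 : ℕ) : ℝ) = (d : ℝ) * n / 2 := by
    rw [Nat.cast_div hdn.two_dvd (by norm_num)]
    push_cast
    rfl
  rw [hhalfN, Nat.cast_ofNat] at l4
  rw [hEZ, Real.log_div (mul_ne_zero c1 c2) c3, Real.log_mul c1 c2]
  linarith

/-! ### The estimate -/

/-- For every `K ≥ 2`, `d ≥ 3` there is `C = C(K,d) > 0` such that for all
`n ≥ 2` with `d·n` even and every `(d,n)`-admissible pair `(ρ,μ)` with `μ_ii = 0`, with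
`ρ̂_ij = 1_{i≠j}·ρ_i·ρ_j/(1 − Σ_l ρ_l²)`, one has
`|(1/n)·ln E[Z_μ] − H(ρ) − (d/2)·ln(1 − Σ_l ρ_l²) + (d/2)·D(μ‖ρ̂)| ≤ C·(ln n)/n`. -/
theorem statement_6 :
    ∀ K d : ℕ, 2 ≤ K → 3 ≤ d →
      ∃ C : ℝ, 0 < C ∧
        ∀ n : ℕ, 2 ≤ n → Even (d * n) →
          ∀ (ρ : Fin K → ℝ) (μ : Fin K → Fin K → ℝ),
            Admissible K d n ρ μ → (∀ i, μ i i = 0) →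
            |(1 / (n : ℝ)) * Real.log (EZpart K n d ρ μ) - Hent ρ -
                ((d : ℝ) / 2) * Real.log (1 - ∑ l, (ρ l) ^ 2) +
                ((d : ℝ) / 2) * KLmat μ
                  (fun i j => if i = j then 0 else ρ i * ρ j / (1 - ∑ l, (ρ l) ^ 2))| ≤
              C * Real.log n / n := by
  intro K d hK hd
  have hlog2 : 0 < Real.log 2 := Real.log_pos one_lt_two
  have hlogd : 0 ≤ Real.log d := Real.log_natCast_nonneg d
  -- `A * ln n` dominates the error `ln (d n) + 1` of one factorial when `n ≥ 2`.
  set A : ℝ := (Real.log d + 1) / Real.log 2 + 1 with hA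
  have hApos : 0 < A := by positivity
  refine ⟨(3 + 2 * K + (1 / 2) * K ^ 2) * A, by positivity, ?_⟩
  intro n hn hdn ρ μ hadm hdiag
  obtain ⟨hρ, hρ1, hμ, hμ1, hsymm, hρn, hμn, hrow⟩ := hadm
  choose a ha using hρn
  choose m hm using hμn
  have hn0 : (0 : ℝ) < n := by positivity
  have hd0 : (0 : ℝ) < d := by positivity
  have hsum : ∑ i, a i = n := by
    have : ((∑ i, a i : ℕ) : ℝ) = n := by
      push_cast
      simp only [← ha, ← sum_mul, hρ1, one_mul]
    exact_mod_cast this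
  have hmsymm : ∀ i j, m i j = m j i := fun i j => by
    have : (m i j : ℝ) = m j i := by rw [← hm, ← hm, hsymm]
    exact_mod_cast this
  have hmdiag : ∀ i, m i i = 0 := fun i => by
    have : (m i i : ℝ) = 0 := by rw [← hm, hdiag, zero_mul]
    exact_mod_cast this
  have hmrow : ∀ i, ∑ j, m i j = a i * d := fun i => by
    have : ((∑ j, m i j : ℕ) : ℝ) = ((a i * d : ℕ) : ℝ) := by
      push_cast
      simp only [← hm, ← sum_mul, hrow, ← ha]
      ring
    exact_mod_cast this
  have hEZ := log_EZpart hdn ρ μ a m ha hsum hm hmsymm hmdiag hmrow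
  have hrate := rate_eq (K := K) (d := d) (n := n) (by omega) (by omega) ρ μ hρ hρ1 hμ hsymm
    hrow hdiag
  have hale : ∀ i, a i ≤ n := fun i => by
    rw [← hsum]; exact single_le_sum (fun _ _ => Nat.zero_le _) (mem_univ i)
  have hadle : ∀ i, a i * d ≤ d * n := fun i => by
    rw [mul_comm]; exact Nat.mul_le_mul_left d (hale i)
  have hmle : ∀ i j, m i j ≤ d * n := fun i j =>
    le_trans (by rw [← hmrow]; exact single_le_sum (fun _ _ => Nat.zero_le _) (mem_univ j))
      (hadle i)
  set E : ℝ := Real.log ((d * n : ℕ) : ℝ) + 1 with hE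
  have b1 : |Real.log (n.factorial : ℝ) - stir n| ≤ E :=
    log_factorial_approx (Nat.le_mul_of_pos_left n (by omega))
  have b2 : |∑ i, Real.log ((a i).factorial : ℝ) - ∑ i, stir (ρ i * n)| ≤ K * E := by
    rw [← sum_sub_distrib]
    refine (abs_sum_le_sum_abs _ _).trans ((sum_le_card_nsmul _ _ E fun i _ => ?_).trans
      (by simp))
    rw [ha]
    exact log_factorial_approx ((hale i).trans (Nat.le_mul_of_pos_left n (by omega)))
  have b3 : |∑ i, Real.log ((a i * d).factorial : ℝ) - ∑ i, stir (ρ i * (d * n))| ≤ K * E := by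
    rw [← sum_sub_distrib]
    refine (abs_sum_le_sum_abs _ _).trans ((sum_le_card_nsmul _ _ E fun i _ => ?_).trans
      (by simp))
    have : ρ i * (d * n) = ((a i * d : ℕ) : ℝ) := by
      push_cast; rw [← ha]; ring
    rw [this]
    exact log_factorial_approx (hadle i)
  have b4 : |∑ i, ∑ j, Real.log ((m i j).factorial : ℝ) - ∑ i, ∑ j, stir (μ i j * (d * n))| ≤
      K * (K * E) := by
    rw [← sum_sub_distrib]
    refine (abs_sum_le_sum_abs _ _).trans ((sum_le_card_nsmul _ _ (K * E) fun i _ => ?_).trans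
      (by simp))
    rw [← sum_sub_distrib]
    refine (abs_sum_le_sum_abs _ _).trans ((sum_le_card_nsmul _ _ E fun j _ => ?_).trans
      (by simp))
    rw [hm]
    exact log_factorial_approx (hmle i j)
  have b5 : |Real.log ((d * n).factorial : ℝ) - stir (d * n)| ≤ E := by
    have := log_factorial_approx (le_refl (d * n))
    rwa [← hE, Nat.cast_mul] at this
  have b6 : |Real.log ((d * n / 2).factorial : ℝ) - stir (1 / 2 * (d * n))| ≤ E := by
    have h1 : (1 / 2 * (d * n) : ℝ) = ((d * n / 2 : ℕ) : ℝ) := by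
      rw [Nat.cast_div hdn.two_dvd (by norm_num)]
      push_cast
      ring
    rw [h1]
    exact log_factorial_approx (Nat.div_le_self _ _)
  have hEA : E ≤ A * Real.log n := by
    have h1 : Real.log 2 ≤ Real.log n := Real.log_le_log two_pos (by exact_mod_cast hn)
    have h2 : Real.log d + 1 ≤ (Real.log d + 1) / Real.log 2 * Real.log n := by
      rw [div_mul_eq_mul_div, le_div_iff₀ hlog2]
      gcongr
    rw [hE, Nat.cast_mul, Real.log_mul hd0.ne' hn0.ne', hA]
    linarith
  have hmain : |Real.log (EZpart K n d ρ μ) - n * (Hent ρ +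
      ((d : ℝ) / 2) * Real.log (1 - ∑ l, (ρ l) ^ 2) - ((d : ℝ) / 2) * KLmat μ
        (fun i j => if i = j then 0 else ρ i * ρ j / (1 - ∑ l, (ρ l) ^ 2)))| ≤
      (3 + 2 * K + (1 / 2) * K ^ 2) * E := by
    unfold Hent KLmat
    rw [hrate, hEZ]
    rw [abs_le] at *
    constructor <;> nlinarith
  have hfin : (1 / (n : ℝ)) * Real.log (EZpart K n d ρ μ) - Hent ρ -
      ((d : ℝ) / 2) * Real.log (1 - ∑ l, (ρ l) ^ 2) + ((d : ℝ) / 2) * KLmat μ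
        (fun i j => if i = j then 0 else ρ i * ρ j / (1 - ∑ l, (ρ l) ^ 2)) =
      (Real.log (EZpart K n d ρ μ) - n * (Hent ρ +
      ((d : ℝ) / 2) * Real.log (1 - ∑ l, (ρ l) ^ 2) - ((d : ℝ) / 2) * KLmat μ
        (fun i j => if i = j then 0 else ρ i * ρ j / (1 - ∑ l, (ρ l) ^ 2)))) / n := by
    field_simp
    ring
  rw [hfin, abs_div, abs_of_pos hn0]
  gcongr
  refine hmain.trans ?_
  rw [mul_assoc]
  gcongr
end

section
/- Assume k ≥ k0 for a sufficiently large absolute constant k0, k divides n, dn is even, and d is an integer with (2k−2)·ln(k−1) ≤ d ≤ (2k−1)·ln k − 2·ln 2 − k^{−0.9}. Call a balanced proper k-coloring σ of the uniformly random (n,d)-configuration Γ skewed if max_{1≤i<j≤k} |e_Γ(σ⁻¹(i),σ⁻¹(j)) − dn/(k(k−1))| > √n·ln n, and let Z′_bal denote the number of skewed balanced proper k-colorings. Then there is a constant c = c(k,d) > 0 such that E[Z′_bal] ≤ exp(−c·ln² n)·E[Z_bal] for all sufficiently large n. -/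
/-!
Fix a balanced colouring `σ`, so that every colour has `N = dn/k` clones. The number of
configurations for which `σ` is proper with exactly `m i j` edges between the classes `i < j` is
`(N!)^k / ∏_{i<j} (m i j)!`, provided the row sums of `m` all equal `N`. This is
`card_matchings_mul` with `card_labelling`: count the colour-preserving bijections from an
abstract set of half-edges to the clones. There are `(N!)^k` of them, each induces one
configuration, and each configuration is induced by `∏_{i<j} (m i j)!` of them.

Put `μ = N / (k - 1)`. The convex function `x log x - x` lies above its tangent at `μ` by at least
`(x - μ)² / (4 N)` on `[0, N]`, so a deviation `|m i j - μ| > √n log n` costs a factor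
`exp (-(k / (4 d)) log² n)` compared with edge counts `m'` that stay within `k` of `μ`, up to
factors polynomial in `n`; the terms linear in `m` cancel because `∑ m = ∑ m' = kN/2`
(`card_matchings_compare`). Such an `m'` exists: distribute `⌊μ⌋` uniformly and place the
remainder along a perfect matching (`k` even) or a cycle (`k` odd) on the colours
(`exists_regular_matrix`). Only polynomially many `m` occur, so summing over the skewed ones and
then over `σ` gives the claim, since `log² n` dominates `log n`.
-/


open Finset
open scoped Classical

open RRG

noncomputable section

namespace SkewCount

/-! ### Counting matchings with prescribed edge counts -/

/-- Pairs `i < j` of distinct colours. -/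
abbrev Pair (k : ℕ) : Type := {p : Fin k × Fin k // p.1 < p.2}

/-- The abstract edges of a configuration with `m p` edges between the two classes of `p`. -/
abbrev Edge {k : ℕ} (m : Pair k → ℕ) : Type := Σ p : Pair k, Fin (m p)

/-- The colour of an abstract half-edge: the end `false` lies in the smaller colour. -/
def halfCol {k : ℕ} {m : Pair k → ℕ} (y : Edge m × Bool) : Fin k :=
  if y.2 = true then y.1.1.1.2 else y.1.1.1.1

/-- A properly coloured perfect matching of `X`; properness excludes fixed points. -/
structure IsProperMatching {X : Type*} {k : ℕ} (col : X → Fin k) (Γ : X → X) : Prop where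
  inv : ∀ x, Γ (Γ x) = x
  ne : ∀ x, col (Γ x) ≠ col x

/-- The edge counts of `Γ` between distinct colour classes. -/
def edgeCount {X : Type*} [Fintype X] {k : ℕ} (col : X → Fin k) (Γ : X → X) (p : Pair k) : ℕ :=
  (univ.filter fun x => col x = p.1.1 ∧ col (Γ x) = p.1.2).card

open Nat in
/-- Such bijections form a torsor under the label-preserving permutations of `B`. -/
theorem card_labelled_equiv {A B ι : Type*} [Fintype A] [Fintype B] [Fintype ι]
    (a : A → ι) (b : B → ι)
    (h : ∀ i, Nat.card {x // a x = i} = Nat.card {y // b y = i}) :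
    Nat.card {e : A ≃ B // ∀ x, b (e x) = a x} =
      ∏ i, (Nat.card {y // b y = i})! := by
  set e0 : A ≃ B := Equiv.ofFiberEquiv (fun i => (Finite.card_eq.1 (h i)).some) with he0
  have h0 : ∀ x, b (e0 x) = a x := fun x => Equiv.ofFiberEquiv_map _ x
  have h1 : ∀ y, a (e0.symm y) = b y := fun y => by rw [← h0]; simp
  have hs := DomMulAct.stabilizer_card b
  simp only [← Nat.card_eq_fintype_card] at hs
  rw [← hs]
  refine Nat.card_congr
    { toFun := fun e => ⟨e0.symm.trans e.1, ?_⟩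
      invFun := fun g => ⟨e0.trans g.1, ?_⟩
      left_inv := fun e => by ext; simp
      right_inv := fun g => by ext; simp }
  · funext y; simp [e.2, h1]
  · intro x
    have := congrFun g.2 (e0 x)
    simp only [Function.comp] at this
    simp [this, h0]

section Counting

variable {X : Type*} {k : ℕ} (col : X → Fin k) (m : Pair k → ℕ)

/-- Identifications of the abstract half-edges with `X` that respect colours. -/
abbrev Labelling : Type _ := {e : Edge m × Bool ≃ X // ∀ y, col (e y) = halfCol y}

/-- The properly coloured perfect matchings with edge counts `m`. -/
abbrev Matchings [Fintype X] : Type _ := {Γ : X → X // IsProperMatching col Γ ∧ edgeCount col Γ = m}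

variable {col m}

/-- The matching of `X` induced by a labelling. -/
def induced (e : Labelling col m) (x : X) : X :=
  e.1 ((e.1.symm x).1, !(e.1.symm x).2)

theorem induced_apply (e : Labelling col m) (h : Edge m) (b : Bool) :
    induced e (e.1 (h, b)) = e.1 (h, !b) := by
  simp [induced]

theorem induced_mem [Fintype X] (e : Labelling col m) :
    IsProperMatching col (induced e) ∧ edgeCount col (induced e) = m := by
  refine ⟨⟨fun x => ?_, fun x => ?_⟩, ?_⟩
  · obtain ⟨⟨h, b⟩, rfl⟩ := e.1.surjective x
    simp [induced_apply]
  · obtain ⟨⟨h, b⟩, rfl⟩ := e.1.surjective x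
    rw [induced_apply, e.2, e.2]
    have := h.1.2
    cases b
    · simpa [halfCol] using this.ne'
    · simpa [halfCol] using this.ne
  · funext p
    have : Finset.card (univ : Finset (Fin (m p))) = edgeCount col (induced e) p := by
      unfold edgeCount
      refine Finset.card_bij (fun s _ => e.1 (⟨p, s⟩, false)) ?_ ?_ ?_
      · intro s _
        simp [induced_apply, e.2, halfCol]
      · intro s _ t _ hst
        simpa using hst
      · intro x hx
        obtain ⟨⟨⟨q, s⟩, b⟩, rfl⟩ := e.1.surjective x
        simp only [mem_filter, mem_univ, true_and, induced_apply, e.2] at hx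
        cases b
        · have hq : q = p := by
            apply Subtype.ext; apply Prod.ext
            · simpa [halfCol] using hx.1
            · simpa [halfCol] using hx.2
          subst hq
          exact ⟨s, mem_univ _, rfl⟩
        · exfalso
          have hq := q.2
          have hp := p.2
          have h1 : q.1.2 = p.1.1 := by simpa [halfCol] using hx.1
          have h2 : q.1.1 = p.1.2 := by simpa [halfCol] using hx.2
          rw [← h1, ← h2] at hp
          exact lt_asymm hp hq
    simpa using this.symm

/-- The clones whose partner has a larger colour: one end of every edge of `Γ`. -/
abbrev Lower (col : X → Fin k) (Γ : X → X) : Type _ := {x : X // col x < col (Γ x)}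

/-- The pair of colours joined by the edge at a lower end. -/
def lowerPair {Γ : X → X} (x : Lower col Γ) : Pair k := ⟨(col x.1, col (Γ x.1)), x.2⟩

/-- Every clone is either a lower end or the partner of one. -/
def lowerEquiv {Γ : X → X} (hΓ : IsProperMatching col Γ) : Lower col Γ × Bool ≃ X :=
  Equiv.ofBijective (fun z => if z.2 = true then Γ z.1.1 else z.1.1) <| by
    constructor
    · rintro ⟨⟨x, hx⟩, b⟩ ⟨⟨y, hy⟩, c⟩ h
      cases b <;> cases c <;> simp only [if_true, Bool.false_eq_true, if_false] at h
      · simp [h]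
      · subst h; rw [hΓ.inv] at hx; exact absurd hx hy.asymm
      · subst h; rw [hΓ.inv] at hy; exact absurd hy hx.asymm
      · have := congrArg Γ h
        rw [hΓ.inv, hΓ.inv] at this
        simp [this]
    · intro x
      rcases lt_or_gt_of_ne (hΓ.ne x) with h | h
      · exact ⟨(⟨Γ x, by rwa [hΓ.inv]⟩, true), by simp [hΓ.inv]⟩
      · exact ⟨(⟨x, h⟩, false), by simp⟩

theorem lowerEquiv_false {Γ : X → X} (hΓ : IsProperMatching col Γ) (x : Lower col Γ) :
    lowerEquiv hΓ (x, false) = x.1 := rfl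

theorem lowerEquiv_true {Γ : X → X} (hΓ : IsProperMatching col Γ) (x : Lower col Γ) :
    lowerEquiv hΓ (x, true) = Γ x.1 := rfl

theorem induced_eq_iff (e : Labelling col m) {Γ : X → X} (hΓ : IsProperMatching col Γ) :
    induced e = Γ ↔ ∀ h, e.1 (h, true) = Γ (e.1 (h, false)) := by
  constructor
  · rintro rfl h
    simp [induced_apply]
  · intro H
    funext x
    obtain ⟨⟨h, b⟩, rfl⟩ := e.1.surjective x
    rw [induced_apply]
    cases b
    · simp [H]
    · simp [H, hΓ.inv]

/-- A labelling inducing `Γ` is determined by where it sends the lower ends. -/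
def fiberEquiv {Γ : X → X} (hΓ : IsProperMatching col Γ) :
    {e : Labelling col m // induced e = Γ} ≃
      {f : Edge m ≃ Lower col Γ // ∀ h, lowerPair (f h) = h.1} where
  toFun e :=
    have H := (induced_eq_iff e.1 hΓ).1 e.2
    have hc : ∀ h, col (e.1.1 (h, false)) = h.1.1.1 := fun h => by
      rw [e.1.2]; simp [halfCol]
    have hc' : ∀ h, col (Γ (e.1.1 (h, false))) = h.1.1.2 := fun h => by
      rw [← H, e.1.2]; simp [halfCol]
    ⟨Equiv.ofBijective (fun h => ⟨e.1.1 (h, false), by rw [hc, hc']; exact h.1.2⟩) <| by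
        constructor
        · intro h h' hh
          simpa using hh
        · rintro ⟨x, hx⟩
          obtain ⟨⟨h, b⟩, rfl⟩ := e.1.1.surjective x
          cases b
          · exact ⟨h, rfl⟩
          · exfalso
            rw [H, hΓ.inv, ← H, e.1.2, e.1.2] at hx
            simp only [halfCol, if_true, Bool.false_eq_true, if_false] at hx
            exact lt_asymm hx h.1.2,
      fun h => Subtype.ext (Prod.ext (hc h) (hc' h))⟩
  invFun f :=
    have hf1 : ∀ h, col (f.1 h).1 = h.1.1.1 := fun h =>
      congrArg (fun p : Pair k => p.1.1) (f.2 h)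
    have hf2 : ∀ h, col (Γ (f.1 h).1) = h.1.1.2 := fun h =>
      congrArg (fun p : Pair k => p.1.2) (f.2 h)
    ⟨⟨(f.1.prodCongr (Equiv.refl Bool)).trans (lowerEquiv hΓ), by
        rintro ⟨h, b⟩
        cases b
        · simpa [lowerEquiv_false, lowerEquiv_true, halfCol] using hf1 h
        · simpa [lowerEquiv_false, lowerEquiv_true, halfCol] using hf2 h⟩, by
      rw [induced_eq_iff _ hΓ]
      intro h
      simp [lowerEquiv_false, lowerEquiv_true]⟩
  left_inv e := by
    have H := (induced_eq_iff e.1 hΓ).1 e.2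
    apply Subtype.ext; apply Subtype.ext; ext ⟨h, b⟩
    cases b
    · simp only [Equiv.trans_apply, Equiv.prodCongr_apply, Prod.map_apply, Equiv.refl_apply,
        lowerEquiv_false]
      rfl
    · simp only [Equiv.trans_apply, Equiv.prodCongr_apply, Prod.map_apply, Equiv.refl_apply,
        lowerEquiv_true, H]
      rfl
  right_inv f := by
    apply Subtype.ext; ext h
    simp [lowerEquiv_false]

/-- The half-edges of each colour are as numerous as the clones of that colour. -/
theorem card_halfCol (e : Labelling col m) (i : Fin k) :
    Nat.card {y : Edge m × Bool // halfCol y = i} = Nat.card {x // col x = i} :=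
  Nat.card_congr (e.1.subtypeEquiv fun y => by rw [e.2])

variable [Fintype X]

open Nat in
theorem card_fiber (Γ : Matchings col m) :
    Nat.card {e : Labelling col m // induced e = Γ.1} = ∏ p, (m p)! := by
  obtain ⟨Γ, hΓ, hm⟩ := Γ
  have hL : ∀ p, Nat.card {x : Lower col Γ // lowerPair x = p} = m p := by
    intro p
    rw [← hm, edgeCount, ← Fintype.card_subtype, ← Nat.card_eq_fintype_card]
    exact Nat.card_congr
      { toFun := fun x => ⟨x.1.1, congrArg (fun p : Pair k => p.1.1) x.2,
          congrArg (fun p : Pair k => p.1.2) x.2⟩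
        invFun := fun x => ⟨⟨x.1, by rw [x.2.1, x.2.2]; exact p.2⟩,
          Subtype.ext (Prod.ext x.2.1 x.2.2)⟩
        left_inv := fun x => rfl
        right_inv := fun x => rfl }
  have hE : ∀ p, Nat.card {h : Edge m // h.1 = p} = m p := by
    intro p
    rw [Nat.card_congr (Equiv.sigmaSubtype p)]
    simp
  rw [Nat.card_congr (fiberEquiv hΓ)]
  rw [card_labelled_equiv (fun h : Edge m => h.1) (fun x : Lower col Γ => lowerPair x)
    (fun p => by rw [hE, hL])]
  exact Finset.prod_congr rfl fun p _ => by rw [hL]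

open Nat in
/-- Double counting of labellings: each matching with counts `m` comes from `∏ (m p)!` of them. -/
theorem card_matchings_mul :
    Nat.card (Matchings col m) * ∏ p, (m p)! = Nat.card (Labelling col m) := by
  let F : Labelling col m → Matchings col m := fun e => ⟨induced e, induced_mem e⟩
  have := Fintype.ofFinite (Matchings col m)
  rw [← Nat.card_congr (Equiv.sigmaFiberEquiv F), Nat.card_sigma]
  rw [Finset.sum_congr rfl (g := fun _ => ∏ p, (m p)!), Finset.sum_const, smul_eq_mul,
    Nat.card_eq_fintype_card]
  · rfl
  · intro Γ _
    rw [← card_fiber Γ]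
    exact Nat.card_congr (Equiv.subtypeEquivRight fun e => by simp [F, Subtype.ext_iff])

open Nat in
theorem card_labelling
    (h : ∀ i, Nat.card {y : Edge m × Bool // halfCol y = i} = Nat.card {x // col x = i}) :
    Nat.card (Labelling col m) = ∏ i, (Nat.card {x // col x = i})! :=
  card_labelled_equiv _ _ h

theorem sum_edgeCount (e : Labelling col m) : 2 * ∑ p, m p = Fintype.card X := by
  rw [← Fintype.card_congr e.1]
  simp [mul_comm]

theorem nonempty_labelling (Γ : Matchings col m) : Nonempty (Labelling col m) := by
  have : Nat.card {e : Labelling col m // induced e = Γ.1} ≠ 0 := by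
    rw [card_fiber]
    exact Finset.prod_ne_zero_iff.2 fun p _ => Nat.factorial_ne_zero _
  obtain ⟨h, -⟩ := Nat.card_ne_zero.1 this
  exact ⟨h.some.1⟩

end Counting

/-! ### Factorial estimates and nearly constant edge counts -/

theorem log_factorial_lower (m : ℕ) {μ N : ℝ} (hμ : 0 < μ) (hμN : μ ≤ N) (hm : (m : ℝ) ≤ N) :
    m * Real.log μ - μ + ((m : ℝ) - μ) ^ 2 / (4 * N) ≤ Real.log (m.factorial : ℝ) := by
  have hN : 0 < N := hμ.trans_le hμN
  rcases Nat.eq_zero_or_pos m with rfl | hpos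
  · have : μ ^ 2 / (4 * N) ≤ μ := by
      rw [div_le_iff₀ (by positivity)]; nlinarith
    simpa using this
  have hm0 : (0 : ℝ) < m := by exact_mod_cast hpos
  have h1 : (m : ℝ) * Real.log m - m ≤ Real.log (m.factorial : ℝ) := by
    have h := Stirling.le_log_factorial_stirling hpos.ne'
    have h2 : 0 ≤ Real.log m := Real.log_natCast_nonneg m
    have h3 : 0 ≤ Real.log (2 * Real.pi) := Real.log_nonneg (by linarith [Real.pi_gt_three])
    linarith
  -- `log x ≥ 2 (1 - 1/√x)` at `x = m/μ` gives the gap `(√m - √μ)²`.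
  have h2 : Real.log μ - Real.log m ≤ 2 * (√μ / √m - 1) := by
    have h := Real.log_le_sub_one_of_pos (x := √μ / √m) (by positivity)
    rw [Real.log_div (by positivity) (by positivity), Real.log_sqrt hμ.le,
      Real.log_sqrt hm0.le] at h
    linarith
  have hsm : √(m : ℝ) * √m = m := Real.mul_self_sqrt hm0.le
  have hsμ : √μ * √μ = μ := Real.mul_self_sqrt hμ.le
  have h3 : (m : ℝ) * (Real.log μ - Real.log m) ≤ 2 * (√μ * √m - m) := by
    have h := mul_le_mul_of_nonneg_left h2 hm0.le
    have e : (m : ℝ) * (2 * (√μ / √m - 1)) = 2 * (√μ * √m - m) := by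
      have : (m : ℝ) * (√μ / √m) = √μ * √m := by
        have hne : √(m : ℝ) ≠ 0 := by positivity
        field_simp
        linarith [hsm]
      linarith
    linarith
  have h4 : ((m : ℝ) - μ) ^ 2 / (4 * N) ≤ (√m - √μ) ^ 2 := by
    rw [div_le_iff₀ (by positivity)]
    have e : ((m : ℝ) - μ) ^ 2 = (√m - √μ) ^ 2 * (√m + √μ) ^ 2 := by
      rw [← mul_pow]; congr 1; nlinarith
    rw [e]
    refine mul_le_mul_of_nonneg_left ?_ (sq_nonneg _)
    nlinarith [sq_nonneg (√(m : ℝ) - √μ)]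
  nlinarith

theorem log_factorial_le (m : ℕ) (hm : 0 < m) :
    Real.log (m.factorial : ℝ) ≤ m * Real.log m - m + Real.log m + 1 := by
  induction m, hm using Nat.le_induction with
  | base => simp
  | succ m hm ih =>
    have hm0 : (0 : ℝ) < m := by exact_mod_cast hm
    rw [Nat.factorial_succ, Nat.cast_mul, Real.log_mul (by positivity) (by positivity)]
    have h := Real.log_le_sub_one_of_pos (x := (m : ℝ) / (m + 1)) (by positivity)
    rw [Real.log_div (by positivity) (by positivity)] at h
    have h5 : ((m : ℝ) + 1) * (Real.log m - Real.log (m + 1)) ≤ -1 := by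
      have h' := mul_le_mul_of_nonneg_left h (by positivity : (0 : ℝ) ≤ m + 1)
      have e : ((m : ℝ) + 1) * (m / (m + 1) - 1) = -1 := by field_simp; ring
      linarith
    push_cast
    nlinarith

theorem log_factorial_upper (m : ℕ) {μ N K : ℝ} (hK : 1 < K) (hμ : K ^ 2 ≤ μ)
    (hmμ : |(m : ℝ) - μ| ≤ K) (hm : (m : ℝ) ≤ N) :
    Real.log (m.factorial : ℝ) ≤ m * Real.log μ - μ + Real.log N + 2 := by
  obtain ⟨ha, hb⟩ := abs_le.1 hmμ
  have hμ0 : 0 < μ := by nlinarith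
  have hm0 : (0 : ℝ) < m := by nlinarith
  have h1 := log_factorial_le m (by exact_mod_cast hm0)
  have h2 : Real.log m ≤ Real.log N := Real.log_le_log hm0 hm
  have h3 := Real.log_le_sub_one_of_pos (x := (m : ℝ) / μ) (by positivity)
  rw [Real.log_div hm0.ne' hμ0.ne'] at h3
  have h4 : (m : ℝ) * (m / μ - 1) ≤ (m - μ) + 1 := by
    have e : (m : ℝ) * (m / μ - 1) = (m - μ) + (m - μ) ^ 2 / μ := by field_simp; ring
    have : ((m : ℝ) - μ) ^ 2 / μ ≤ 1 := by
      rw [div_le_one hμ0]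
      nlinarith
    linarith
  have h5 := mul_le_mul_of_nonneg_left h3 hm0.le
  linarith

/-- A nearly constant symmetric matrix with zero diagonal and all row sums `N`. -/
theorem exists_regular_matrix (k N : ℕ) (hk : 3 ≤ k) (hkN : Even (k * N)) :
    ∃ M : Fin k → Fin k → ℕ, (∀ i j, M i j = M j i) ∧ (∀ i, M i i = 0) ∧
      (∀ i, ∑ j, M i j = N) ∧
      ∀ i j, i ≠ j → |(M i j : ℝ) - (N : ℝ) / ((k : ℝ) - 1)| ≤ k := by
  set q := N / (k - 1) with hq
  set r := N % (k - 1) with hr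
  have hqr : (k - 1) * q + r = N := Nat.div_add_mod _ _
  have hrk : r < k - 1 := Nat.mod_lt _ (by omega)
  obtain ⟨E, hE1, hE2, hE3⟩ : ∃ E : Fin k → Fin k → ℕ, (∀ i j, E i j = E j i) ∧
      (∀ i, E i i = 0) ∧ (∀ i, ∑ j, E i j = r) := by
    rcases Nat.even_or_odd k with hke | hko
    · -- `r` copies of the perfect matching `i ↔ k - 1 - i`
      refine ⟨fun i j => if j = Fin.rev i then r else 0, fun i j => ?_, fun i => ?_, fun i => ?_⟩
      · have : j = Fin.rev i ↔ i = Fin.rev j := by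
          constructor <;> rintro rfl <;> simp
        simp [this]
      · refine if_neg fun h => ?_
        have := congrArg Fin.val h
        rw [Fin.val_rev] at this
        obtain ⟨a, ha⟩ := hke
        omega
      · simp
    · -- `r / 2` copies of the cycle on the `k` colours; here `N` and hence `r` is even
      have : NeZero k := ⟨by omega⟩
      have hNe : Even N := by
        rcases Nat.even_mul.1 hkN with h | h
        · exact absurd h (Nat.not_even_iff_odd.2 hko)
        · exact h
      have hre : Even r := by
        have h2 : Even ((k - 1) * q) := (Nat.Odd.sub_odd hko odd_one).mul_right q
        rw [← hqr] at hNe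
        exact (Nat.even_add.1 hNe).1 h2
      obtain ⟨s, hs⟩ := hre
      refine ⟨fun i j => (if j = i + 1 then s else 0) + (if i = j + 1 then s else 0),
        fun i j => add_comm _ _, fun i => ?_, fun i => ?_⟩
      · have : i ≠ i + 1 := by
          intro h
          have h1 : (1 : Fin k) = 0 := by simpa using h.symm
          have := congrArg Fin.val h1
          rw [Fin.val_one', Fin.val_zero, Nat.mod_eq_of_lt (by omega)] at this
          omega
        simp [this]
      · rw [Finset.sum_add_distrib]
        have : ∀ j : Fin k, i = j + 1 ↔ j = i - 1 := fun j =>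
          ⟨fun h => by simp [h], fun h => by simp [h]⟩
        simp [this, hs]
  have hEle : ∀ i j, E i j ≤ r := fun i j => by
    rw [← hE3 i]
    exact Finset.single_le_sum (f := fun j => E i j) (fun _ _ => Nat.zero_le _) (mem_univ j)
  refine ⟨fun i j => (if i = j then 0 else q) + E i j, fun i j => ?_, fun i => ?_, fun i => ?_,
    fun i j hij => ?_⟩
  · simp [hE1 i j, eq_comm]
  · simp [hE2]
  · rw [Finset.sum_add_distrib, hE3]
    rw [← hqr]
    congr 1
    rw [← Finset.add_sum_erase _ _ (mem_univ i)]
    rw [if_pos rfl, Finset.sum_congr rfl (g := fun _ => q)]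
    · simp
    · intro j hj
      rw [if_neg (Finset.ne_of_mem_erase hj).symm]
  · have hk1 : (0 : ℝ) < (k : ℝ) - 1 := by
      have : (3 : ℝ) ≤ k := by exact_mod_cast hk
      linarith
    have hN : (N : ℝ) / ((k : ℝ) - 1) = q + r / ((k : ℝ) - 1) := by
      rw [← hqr]; push_cast [Nat.cast_sub (by omega : 1 ≤ k)]; field_simp
    have hr1 : (r : ℝ) / ((k : ℝ) - 1) ≤ 1 := by
      rw [div_le_one hk1]
      have : ((r + 1 : ℕ) : ℝ) ≤ k := by exact_mod_cast (by omega : r + 1 ≤ k)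
      push_cast at this; linarith
    have hr0 : 0 ≤ (r : ℝ) / ((k : ℝ) - 1) := by positivity
    have hEk : (E i j : ℝ) ≤ k := by exact_mod_cast (hEle i j).trans (by omega)
    have hE0 : (0 : ℝ) ≤ E i j := by positivity
    have hk3 : (3 : ℝ) ≤ k := by exact_mod_cast hk
    simp only [hN, if_neg hij, abs_le]
    push_cast
    constructor <;> linarith

theorem eventually_quadratic (a b c : ℝ) (ha : 0 < a) :
    ∃ N : ℕ, ∀ n : ℕ, N ≤ n → b * Real.log n + c ≤ a * Real.log n ^ 2 := by
  have h : Filter.Tendsto (fun n : ℕ => Real.log n) Filter.atTop Filter.atTop :=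
    Real.tendsto_log_atTop.comp tendsto_natCast_atTop_atTop
  obtain ⟨N, hN⟩ := Filter.eventually_atTop.1
    (h.eventually_ge_atTop (max 1 ((|b| + |c|) / a)))
  refine ⟨N, fun n hn => ?_⟩
  have h1 := (le_max_left _ _).trans (hN n hn)
  have h2 := (le_max_right _ _).trans (hN n hn)
  rw [div_le_iff₀ ha] at h2
  set L := Real.log n
  have hb : b * L ≤ |b| * L := mul_le_mul_of_nonneg_right (le_abs_self b) (by linarith)
  have hc : c ≤ |c| * L := (le_abs_self c).trans (by nlinarith [abs_nonneg c])
  nlinarith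

theorem labelling_le {X : Type*} [Fintype X] {k : ℕ} {col : X → Fin k} {m : Pair k → ℕ}
    (e : Labelling col m) {N : ℕ} (hN : ∀ i, Nat.card {x // col x = i} = N) (p : Pair k) :
    m p ≤ N := by
  rw [← hN p.1.1, Nat.card_eq_fintype_card, Fintype.card_subtype]
  conv_lhs => rw [← (induced_mem e).2]
  exact Finset.card_le_card fun x hx => by
    simp only [mem_filter, mem_univ, true_and] at hx ⊢
    exact hx.1

/-- Edge counts with one entry at distance more than `t` from the mean `μ = N / (k - 1)` are
exponentially less likely than edge counts all within `k` of `μ`: the two counts are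
inversely proportional to `∏ (m p)!`, and the linear terms of the factorial bounds cancel because
both edge counts have the same sum. -/
theorem card_matchings_compare {X : Type*} [Fintype X] {k : ℕ} {col : X → Fin k}
    {m m' : Pair k → ℕ} (e : Labelling col m) (e' : Labelling col m') {N : ℕ}
    (hN : ∀ i, Nat.card {x // col x = i} = N) (hk : 3 ≤ k) {μ : ℝ}
    (hμ : (k : ℝ) ^ 2 ≤ μ) (hμN : μ ≤ N)
    (hclose : ∀ p, |(m' p : ℝ) - μ| ≤ k) {t : ℝ} (ht : 0 ≤ t)
    (hskew : ∃ p, t < |(m p : ℝ) - μ|) :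
    (Nat.card (Matchings col m) : ℝ) ≤
      Real.exp (-(t ^ 2 / (4 * N)) + Fintype.card (Pair k) * (Real.log N + 2)) *
        Nat.card (Matchings col m') := by
  have hk3 : (3 : ℝ) ≤ k := by exact_mod_cast hk
  have hμ0 : 0 < μ := by nlinarith
  have hN0 : (0 : ℝ) < N := hμ0.trans_le hμN
  have hD : Nat.card (Matchings col m) * ∏ p, (m p).factorial =
      Nat.card (Matchings col m') * ∏ p, (m' p).factorial := by
    rw [card_matchings_mul, card_matchings_mul, card_labelling (card_halfCol e),
      card_labelling (card_halfCol e')]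
  have hsum : ∑ p, (m p : ℝ) = ∑ p, (m' p : ℝ) := by
    have := (sum_edgeCount e).trans (sum_edgeCount e').symm
    exact_mod_cast Nat.eq_of_mul_eq_mul_left two_pos this
  have hlog : ∑ p, Real.log ((m' p).factorial : ℝ) ≤
      ∑ p, Real.log ((m p).factorial : ℝ) +
        (-(t ^ 2 / (4 * N)) + Fintype.card (Pair k) * (Real.log N + 2)) := by
    have h1 : ∑ p, Real.log ((m' p).factorial : ℝ) ≤
        ∑ p : Pair k, ((m' p : ℝ) * Real.log μ - μ + Real.log N + 2) :=
      Finset.sum_le_sum fun p _ => log_factorial_upper (m' p) (by linarith) hμ (hclose p)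
        (by exact_mod_cast labelling_le e' hN p)
    have h2 : ∑ p : Pair k, ((m p : ℝ) * Real.log μ - μ + ((m p : ℝ) - μ) ^ 2 / (4 * N)) ≤
        ∑ p, Real.log ((m p).factorial : ℝ) :=
      Finset.sum_le_sum fun p _ => log_factorial_lower (m p) hμ0 hμN
        (by exact_mod_cast labelling_le e hN p)
    have h3 : t ^ 2 / (4 * N) ≤ ∑ p : Pair k, ((m p : ℝ) - μ) ^ 2 / (4 * N) := by
      obtain ⟨p, hp⟩ := hskew
      refine le_trans ?_ (Finset.single_le_sum (f := fun p => ((m p : ℝ) - μ) ^ 2 / (4 * (N : ℝ)))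
        (fun _ _ => by positivity) (mem_univ p))
      have : t ^ 2 ≤ ((m p : ℝ) - μ) ^ 2 := by
        rw [← sq_abs ((m p : ℝ) - μ)]
        exact pow_le_pow_left₀ ht hp.le 2
      show t ^ 2 / (4 * N) ≤ ((m p : ℝ) - μ) ^ 2 / (4 * (N : ℝ))
      gcongr
    simp only [Finset.sum_add_distrib, Finset.sum_sub_distrib, ← Finset.sum_mul,
      Finset.sum_const, Finset.card_univ, nsmul_eq_mul] at h1 h2
    rw [hsum] at h2
    linarith
  rw [← Real.log_prod (fun p _ => by positivity), ← Real.log_prod (fun p _ => by positivity)]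
    at hlog
  have hpos : 0 < ∏ p, ((m p).factorial : ℝ) := Finset.prod_pos fun p _ => by positivity
  have hpos' : 0 < ∏ p, ((m' p).factorial : ℝ) := Finset.prod_pos fun p _ => by positivity
  have hprod := Real.exp_le_exp.2 hlog
  rw [Real.exp_add, Real.exp_log hpos, Real.exp_log hpos'] at hprod
  have hD' : (Nat.card (Matchings col m) : ℝ) * ∏ p, ((m p).factorial : ℝ) =
      Nat.card (Matchings col m') * ∏ p, ((m' p).factorial : ℝ) := by exact_mod_cast hD
  refine le_of_mul_le_mul_right ?_ hpos
  rw [hD']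
  calc _ ≤ (Nat.card (Matchings col m') : ℝ) * _ :=
        mul_le_mul_of_nonneg_left hprod (Nat.cast_nonneg _)
    _ = _ := by ring

/-- Nearly constant edge counts are realised by some matching. -/
theorem exists_close_labelling {X : Type*} [Fintype X] {k : ℕ} {col : X → Fin k} {N : ℕ}
    (hN : ∀ i, Nat.card {x // col x = i} = N) (hk : 3 ≤ k) (hkN : Even (k * N)) :
    ∃ m : Pair k → ℕ, Nonempty (Labelling col m) ∧
      ∀ p, |(m p : ℝ) - (N : ℝ) / ((k : ℝ) - 1)| ≤ k := by
  obtain ⟨M, hM1, hM2, hM3, hM4⟩ := exists_regular_matrix k N hk hkN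
  refine ⟨fun p => M p.1.1 p.1.2, ?_, fun p => hM4 _ _ p.2.ne⟩
  set m : Pair k → ℕ := fun p => M p.1.1 p.1.2 with hm
  have hmarg : ∀ i, Nat.card {y : Edge m × Bool // halfCol y = i} = Nat.card {x // col x = i} := by
    intro i
    have hpt : ∀ a b, (if a < b then
        (if a = i then M a b else 0) + (if b = i then M a b else 0) else 0) =
        (if a = i then (if i < b then M i b else 0) else 0) +
          (if b = i then (if a < i then M i a else 0) else 0) := by
      intro a b
      by_cases ha : a = i
      · subst ha
        by_cases hb : b = a
        · subst hb; simp
        · simp [hb]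
      · by_cases hb : b = i
        · subst hb; simp [ha, hM1 a b]
        · simp [ha, hb]
    rw [hN, ← hM3 i, Nat.card_eq_fintype_card, Fintype.card_subtype, Finset.card_filter,
      Fintype.sum_prod_type, Fintype.sum_sigma]
    simp only [Fintype.sum_bool, halfCol, if_true, Bool.false_eq_true, if_false,
      Finset.sum_const, Finset.card_univ, Fintype.card_fin, smul_eq_mul]
    calc _ = ∑ p : Pair k, ((if p.1.1 = i then M p.1.1 p.1.2 else 0) +
          (if p.1.2 = i then M p.1.1 p.1.2 else 0)) := by
          refine Finset.sum_congr rfl fun p _ => ?_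
          simp only [hm, mul_add, mul_ite, mul_one, mul_zero]
          rw [add_comm]
      _ = ∑ z : Fin k × Fin k, (if z.1 < z.2 then
          (if z.1 = i then M z.1 z.2 else 0) + (if z.2 = i then M z.1 z.2 else 0) else 0) := by
          rw [← Finset.sum_filter, Finset.sum_subtype (p := fun z : Fin k × Fin k => z.1 < z.2)]
          simp
      _ = ∑ j, M i j := by
          rw [Fintype.sum_prod_type]
          simp only [hpt, Finset.sum_add_distrib]
          rw [Finset.sum_comm]
          simp only [Finset.sum_ite_eq', mem_univ, if_true]
          rw [← Finset.sum_add_distrib]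
          refine Finset.sum_congr rfl fun j _ => ?_
          rcases lt_trichotomy i j with h | h | h
          · simp [h, h.not_gt]
          · subst h; simp [hM2]
          · simp [h, h.not_gt]
  have h0 : Nat.card (Labelling col m) ≠ 0 := by
    rw [card_labelling hmarg]
    exact Finset.prod_ne_zero_iff.2 fun p _ => Nat.factorial_ne_zero _
  exact (Nat.card_ne_zero.1 h0).1

/-! ### Skewed configurations -/

theorem card_matchings_eq {n d k : ℕ} (σ : Fin n → Fin k) (m : Pair k → ℕ) :
    (univ.filter fun Γ : Config n d => ProperCol Γ σ ∧
      edgeCount (fun x : Fin n × Fin d => σ x.1) Γ.1 = m).card =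
      Nat.card (Matchings (fun x : Fin n × Fin d => σ x.1) m) := by
  rw [← Fintype.card_subtype, ← Nat.card_eq_fintype_card]
  exact Nat.card_congr
    { toFun := fun Γ => ⟨Γ.1.1, ⟨Γ.1.2.1, Γ.2.1⟩, Γ.2.2⟩
      invFun := fun Γ => ⟨⟨Γ.1, Γ.2.1.inv, fun x h =>
        Γ.2.1.ne x (congrArg (fun y : Fin n × Fin d => σ y.1) h)⟩, Γ.2.1.ne, Γ.2.2⟩
      left_inv := fun Γ => rfl
      right_inv := fun Γ => rfl }

theorem eConf_eq_edgeCount {n d k : ℕ} (Γ : Config n d) (σ : Fin n → Fin k) (p : Pair k) :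
    eConf Γ (colorClass σ p.1.1) (colorClass σ p.1.2) =
      edgeCount (fun x : Fin n × Fin d => σ x.1) Γ.1 p := by
  simp [eConf, edgeCount, colorClass]

theorem card_clones {n d k s : ℕ} {σ : Fin n → Fin k} (hσ : BalancedCol σ) (hk : 0 < k)
    (hn : n = k * s) (i : Fin k) :
    Nat.card {x : Fin n × Fin d // σ x.1 = i} = d * s := by
  have h1 : (colorClass σ i).card = s := by
    have := (hσ i).trans hn
    exact Nat.eq_of_mul_eq_mul_left hk ((mul_comm _ _).trans this)
  rw [Nat.card_eq_fintype_card, Fintype.card_subtype]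
  have : (univ.filter fun x : Fin n × Fin d => σ x.1 = i) = colorClass σ i ×ˢ univ := by
    ext x; simp [colorClass]
  rw [this, Finset.card_product, h1]
  simp [mul_comm]

/-- For a fixed balanced `σ`, skewed matchings are rare among properly coloured ones: sum the
comparison with nearly constant edge counts over all at most `(d n + 1) ^ R` skewed edge counts,
where `R` is the number of pairs of colours. -/
theorem card_skewed_le {n d k s : ℕ} {σ : Fin n → Fin k} (hσ : BalancedCol σ) (hk : 3 ≤ k)
    (hn : n = k * s) (hdn : Even (d * n)) (hμ : (k : ℝ) ^ 2 ≤ (d * s : ℕ) / ((k : ℝ) - 1)) :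
    ((univ.filter fun Γ : Config n d => ProperCol Γ σ ∧ Skewed Γ σ).card : ℝ) ≤
      ((d * n + 1 : ℕ) : ℝ) ^ Fintype.card (Pair k) *
        (Real.exp (-((√n * Real.log n) ^ 2 / (4 * (d * s : ℕ))) +
          Fintype.card (Pair k) * (Real.log (d * s : ℕ) + 2)) *
        ((univ.filter fun Γ : Config n d => ProperCol Γ σ).card : ℝ)) := by
  have hk3 : (3 : ℝ) ≤ k := by exact_mod_cast hk
  set col : Fin n × Fin d → Fin k := fun x => σ x.1 with hcol
  have hN : ∀ i, Nat.card {x // col x = i} = d * s := card_clones hσ (by omega) hn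
  have hkN : Even (k * (d * s)) := by
    rw [hn] at hdn
    rwa [show k * (d * s) = d * (k * s) by ring]
  obtain ⟨m', ⟨e'⟩, hclose⟩ := exists_close_labelling hN hk hkN
  have hmean : (d : ℝ) * n / ((k : ℝ) * ((k : ℝ) - 1)) = (d * s : ℕ) / ((k : ℝ) - 1) := by
    have : (k : ℝ) - 1 ≠ 0 := by linarith
    rw [hn]; push_cast; field_simp
  have hμN : ((d * s : ℕ) : ℝ) / ((k : ℝ) - 1) ≤ (d * s : ℕ) :=
    div_le_self (Nat.cast_nonneg _) (by linarith)
  set S := univ.filter fun Γ : Config n d => ProperCol Γ σ ∧ Skewed Γ σ with hS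
  set T : Finset (Pair k → ℕ) := Fintype.piFinset fun _ => Finset.range (d * n + 1) with hT
  set B : ℝ := Real.exp (-((√n * Real.log n) ^ 2 / (4 * (d * s : ℕ))) +
          Fintype.card (Pair k) * (Real.log (d * s : ℕ) + 2)) with hB
  have hmaps : ∀ Γ ∈ S, edgeCount col Γ.1 ∈ T := by
    intro Γ _
    rw [hT, Fintype.mem_piFinset]
    intro p
    rw [Finset.mem_range, Nat.lt_succ_iff]
    refine (Finset.card_le_univ _).trans ?_
    simp [mul_comm]
  rw [Finset.card_eq_sum_card_fiberwise hmaps, Nat.cast_sum]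
  have hTc : T.card = (d * n + 1) ^ Fintype.card (Pair k) := by simp [hT]
  have hfib : ∀ m ∈ T, (((S.filter fun Γ => edgeCount col Γ.1 = m).card : ℕ) : ℝ) ≤
      B * ((univ.filter fun Γ : Config n d => ProperCol Γ σ).card : ℝ) := by
    intro m _
    rcases (S.filter fun Γ => edgeCount col Γ.1 = m).eq_empty_or_nonempty with h0 | ⟨Γ, hΓ⟩
    · rw [h0]; simp only [card_empty, Nat.cast_zero]; positivity
    · simp only [hS, mem_filter, mem_univ, true_and] at hΓ
      obtain ⟨⟨hp, i, j, hij, hskew⟩, hm⟩ := hΓ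
      obtain ⟨e⟩ := nonempty_labelling
        (⟨Γ.1, ⟨Γ.2.1, hp⟩, hm⟩ : Matchings col m)
      have h1 := card_matchings_compare e e' hN hk hμ hμN hclose
        (t := √n * Real.log n)
        (mul_nonneg (Real.sqrt_nonneg _) (Real.log_natCast_nonneg n))
        ⟨⟨(i, j), hij⟩, by
          rw [hmean] at hskew
          rw [← hm, hcol, ← eConf_eq_edgeCount]
          exact hskew⟩
      have h2 : (S.filter fun Γ => edgeCount col Γ.1 = m).card ≤ Nat.card (Matchings col m) := by
        rw [← card_matchings_eq]
        refine Finset.card_le_card fun Γ hΓ => ?_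
        simp only [hS, mem_filter, mem_univ, true_and] at hΓ ⊢
        exact ⟨hΓ.1.1, hΓ.2⟩
      have h3 : Nat.card (Matchings col m') ≤
          (univ.filter fun Γ : Config n d => ProperCol Γ σ).card := by
        rw [← card_matchings_eq]
        refine Finset.card_le_card fun Γ hΓ => ?_
        simp only [mem_filter, mem_univ, true_and] at hΓ ⊢
        exact hΓ.1
      calc _ ≤ (Nat.card (Matchings col m) : ℝ) := by exact_mod_cast h2
        _ ≤ B * Nat.card (Matchings col m') := h1
        _ ≤ _ := by gcongr
  refine (Finset.sum_le_card_nsmul _ _ _ hfib).trans_eq ?_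
  rw [hTc, nsmul_eq_mul]
  push_cast
  ring

theorem sum_card_filter_comm {A B : Type*} [Fintype A] [Fintype B] (P : A → B → Prop)
    [∀ a b, Decidable (P a b)] :
    ∑ a, ((univ.filter fun b => P a b).card : ℝ) =
      ∑ b, ((univ.filter fun a => P a b).card : ℝ) := by
  simp only [Finset.card_filter, Nat.cast_sum]
  exact Finset.sum_comm

/-- A bound valid for every balanced colouring passes to the expectations. -/
theorem EZskew_le {n d k : ℕ} {C : ℝ}
    (h : ∀ σ : Fin n → Fin k, BalancedCol σ →
      ((univ.filter fun Γ : Config n d => ProperCol Γ σ ∧ Skewed Γ σ).card : ℝ) ≤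
        C * ((univ.filter fun Γ : Config n d => ProperCol Γ σ).card : ℝ)) :
    EZskew n d k ≤ C * EZbal n d k := by
  unfold EZskew EZbal confExp Zskew Zbal
  rw [← mul_div_assoc]
  refine div_le_div_of_nonneg_right ?_ (Nat.cast_nonneg _)
  beta_reduce
  rw [sum_card_filter_comm (fun (Γ : Config n d) (σ : Fin n → Fin k) =>
      BalancedCol σ ∧ ProperCol Γ σ ∧ Skewed Γ σ),
    sum_card_filter_comm (fun (Γ : Config n d) (σ : Fin n → Fin k) =>
      BalancedCol σ ∧ ProperCol Γ σ), Finset.mul_sum]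
  refine Finset.sum_le_sum fun σ _ => ?_
  by_cases hσ : BalancedCol σ
  · simpa [hσ] using h σ hσ
  · simp [hσ]


end SkewCount

end

/-- For `k ≥ k0` (an absolute constant), `k ∣ n`, `d·n` even and integer `d`
with `(2k−2)·ln(k−1) ≤ d ≤ (2k−1)·ln k − 2·ln 2 − k^{−0.9}`, there is `c = c(k,d) > 0` such
that `E[Z'_bal] ≤ exp(−c·ln² n)·E[Z_bal]` for all sufficiently large `n`, where `Z'_bal`
counts the skewed balanced proper `k`-colorings. -/
theorem statement_7 :
    ∃ k0 : ℕ, ∀ k : ℕ, k0 ≤ k → ∀ d : ℕ,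
      (2 * (k : ℝ) - 2) * Real.log ((k : ℝ) - 1) ≤ (d : ℝ) →
      (d : ℝ) ≤ (2 * (k : ℝ) - 1) * Real.log k - 2 * Real.log 2 - (k : ℝ) ^ (-(0.9 : ℝ)) →
      ∃ c : ℝ, 0 < c ∧ ∃ N : ℕ, ∀ n : ℕ, N ≤ n → k ∣ n → Even (d * n) →
        EZskew n d k ≤ Real.exp (-c * (Real.log n) ^ 2) * EZbal n d k := by
  refine ⟨3, fun k hk d hd _ => ?_⟩
  have hk3 : (3 : ℝ) ≤ k := by exact_mod_cast hk
  have hd0 : (0 : ℝ) < d :=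
    (mul_pos (by linarith) (Real.log_pos (by linarith))).trans_le hd
  have hd1 : (1 : ℝ) ≤ d := by exact_mod_cast (Nat.cast_pos.1 hd0 : 0 < d)
  set R : ℝ := (Fintype.card (SkewCount.Pair k) : ℝ) with hR
  have hR0 : 0 ≤ R := Nat.cast_nonneg _
  obtain ⟨N, hN⟩ := SkewCount.eventually_quadratic ((k : ℝ) / (8 * d)) (2 * R)
    (R * (2 * Real.log (2 * d) + 2)) (by positivity)
  refine ⟨(k : ℝ) / (8 * d), by positivity, max N (k ^ 4), fun n hn hkn hdn => ?_⟩
  obtain ⟨s, hs⟩ := hkn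
  have hnk : (k : ℝ) ^ 4 ≤ n := by exact_mod_cast (le_max_right _ _).trans hn
  have hn1 : (1 : ℝ) ≤ n := le_trans (one_le_pow₀ (by linarith)) hnk
  have hns : (n : ℝ) = k * s := by rw [hs]; push_cast; ring
  have hsk : (k : ℝ) ^ 3 ≤ s := by
    have : (k : ℝ) * k ^ 3 ≤ k * s := by rw [← hns]; linarith [hnk, pow_succ' (k : ℝ) 3]
    exact le_of_mul_le_mul_left this (by linarith)
  have hs0 : (0 : ℝ) < s := lt_of_lt_of_le (by positivity) hsk
  have hds : (s : ℝ) ≤ (d * s : ℕ) := by push_cast; nlinarith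
  refine SkewCount.EZskew_le fun σ hσ => ?_
  have hμ : (k : ℝ) ^ 2 ≤ (d * s : ℕ) / ((k : ℝ) - 1) := by
    rw [le_div_iff₀ (by linarith)]
    nlinarith [sq_nonneg (k : ℝ)]
  refine (SkewCount.card_skewed_le hσ hk hs hdn hμ).trans ?_
  rw [← mul_assoc]
  refine mul_le_mul_of_nonneg_right ?_ (Nat.cast_nonneg _)
  have hlogn : 0 ≤ Real.log n := Real.log_nonneg hn1
  have hlog1 : Real.log ((d * n + 1 : ℕ) : ℝ) ≤ Real.log (2 * d) + Real.log n := by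
    rw [← Real.log_mul (by positivity) (by positivity)]
    refine Real.log_le_log (by positivity) ?_
    push_cast
    nlinarith
  have hlog2 : Real.log ((d * s : ℕ) : ℝ) ≤ Real.log (2 * d) + Real.log n := by
    refine (Real.log_le_log (hs0.trans_le hds) ?_).trans hlog1
    rw [hs]
    exact_mod_cast (Nat.mul_le_mul_left d (Nat.le_mul_of_pos_left s (by omega))).trans
      (Nat.le_succ _)
  have hpow : ((d * n + 1 : ℕ) : ℝ) ^ Fintype.card (SkewCount.Pair k) =
      Real.exp (R * Real.log ((d * n + 1 : ℕ) : ℝ)) := by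
    rw [hR, Real.exp_nat_mul, Real.exp_log (by positivity)]
  rw [hpow, ← Real.exp_add]
  refine Real.exp_le_exp.2 ?_
  have hmain : (√n * Real.log n) ^ 2 / (4 * (d * s : ℕ)) =
      2 * ((k : ℝ) / (8 * d) * Real.log n ^ 2) := by
    rw [mul_pow, Real.sq_sqrt (Nat.cast_nonneg _), hns]
    push_cast
    field_simp
    ring
  rw [hmain]
  have hq := hN n ((le_max_left _ _).trans hn)
  have h1 := mul_le_mul_of_nonneg_left hlog1 hR0
  have h2 := mul_le_mul_of_nonneg_left hlog2 hR0
  linarith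
end

section
/- Fix integers k ≥ 3 and d ≥ 3. There is a constant C = C(k,d) > 0 such that for all n ≥ 2 divisible by k with dn even and every n-overlap matrix ρ the following holds: E[Z_{ρ,bal}] ≤ n^C · exp(n·f(ρ)), where Z_{ρ,bal} is the number of pairs (σ,τ) of balanced proper k-colorings of the uniformly random (n,d)-configuration with ρ(σ,τ) = ρ, and f(ρ) = ln k − (1/k)·Σ_{i,j} ρ_ij·ln ρ_ij + (d/2)·ln(1 − 2/k + (1/k²)·Σ_{i,j} ρ_ij²). -/
/-!
For a fixed pair `(σ, τ)` with overlap `ρ`, colour each clone `(v, j)` by the pair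
`(σ v, τ v)`; colour `(i, j)` then has frequency `p_ij = ρ_ij / k`. Let `N = dn`. Both maps are
proper when no matched clones agree in a coordinate of their colours.

*Probability of properness.* If all clones are coloured independently with law `p`, a *fixed*
configuration is compatible with the colouring with probability exactly `Q ^ (N / 2)`, where
`Q = 1 - 2/k + (1/k²) Σ ρ_ij²` is the probability that two independent colours differ in both
coordinates (`sum_labelings`, `sum_allowed`). Averaging over configurations and exchanging the
order of summation, and noting that the number of configurations compatible with a colouring
depends only on its colour counts (`compat_comp_le`), one gets
`P[multinomial(N, p) = N p] · P[σ, τ proper] ≤ Q ^ (N / 2)` (`compat_bound`). Since `N p` is the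
mean, the first factor is at least `(e (N + 1)) ^ (-k²)` by Stirling-type bounds on factorials
(`multinomial_mode`).

*Number of pairs.* Under independent colours with law `p`, every colouring of the vertices with
the prescribed counts has the same probability `∏ p_ij ^ (n p_ij)`, so there are at most
`∏ p_ij ^ (-n p_ij)` of them (`card_labelings_le`), which is the exponential of `n` times the
entropy of `p` (`entropy_prod`).
-/

open Finset
open scoped Classical

open RRG

namespace RRG

/-! ### Independent labels and a fixed matching -/

/-- A fixed-point-free involution on a finite type is, up to an equivalence, the swap of two
copies of a type `Y`. -/
theorem exists_half {X : Type} [Fintype X] (g : X → X) (hg : ∀ x, g (g x) = x)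
    (hf : ∀ x, g x ≠ x) :
    ∃ (Y : Type) (_ : Fintype Y) (e : Y ⊕ Y ≃ X),
      (∀ y, g (e (Sum.inl y)) = e (Sum.inr y)) ∧ (∀ y, g (e (Sum.inr y)) = e (Sum.inl y)) := by
  let f := Fintype.equivFin X
  refine ⟨{x : X // f x < f (g x)}, inferInstance,
    -- `Y` picks from each matched pair the element that comes first in an enumeration of `X`.
    Equiv.ofBijective (Sum.elim (fun y => y.1) (fun y => g y.1)) ⟨?_, ?_⟩, ?_, ?_⟩
  · rintro (⟨x, hx⟩ | ⟨x, hx⟩) (⟨y, hy⟩ | ⟨y, hy⟩) h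
    · exact congrArg Sum.inl (Subtype.ext h)
    · have h' : x = g y := h
      rw [h', hg] at hx
      exact absurd hx (lt_asymm hy)
    · have h' : g x = y := h
      rw [← h', hg] at hy
      exact absurd hy (lt_asymm hx)
    · replace h : g x = g y := h
      have : x = y := by rw [← hg x, h, hg]
      exact congrArg Sum.inr (Subtype.ext this)
  · intro x
    rcases lt_or_gt_of_ne (fun h => hf x (f.injective h) : f (g x) ≠ f x) with h | h
    · exact ⟨Sum.inr ⟨g x, by rw [hg]; exact h⟩, by simp [hg]⟩
    · exact ⟨Sum.inl ⟨x, h⟩, by simp⟩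
  · exact fun y => rfl
  · exact fun y => hg y.1

/-- With independent labels of weights `p`, the total weight of the labelings that put related
labels on every pair of the involution `g` factorizes over the `h` pairs. -/
theorem sum_labelings {X T : Type} [Fintype X] [DecidableEq X] [Fintype T] (g : X → X)
    (hg : ∀ x, g (g x) = x) (hf : ∀ x, g x ≠ x) (A : T → T → Prop)
    (hA : ∀ s t, A s t → A t s) (p : T → ℝ) (h : ℕ) (hh : Fintype.card X = 2 * h) :
    ∑ c : X → T, (if ∀ x, A (c (g x)) (c x) then ∏ x, p (c x) else 0) =
      (∑ st : T × T, if A st.1 st.2 then p st.1 * p st.2 else 0) ^ h := by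
  obtain ⟨Y, _, e, h1, h2⟩ := exists_half g hg hf
  have hY : Fintype.card Y = h := by
    have := Fintype.card_congr e
    rw [Fintype.card_sum] at this
    omega
  let E : (Y → T × T) ≃ (X → T) :=
    ((Equiv.arrowProdEquivProdArrow Y (fun _ => T) (fun _ => T)).trans
      (Equiv.sumArrowEquivProdArrow Y Y T).symm).trans (Equiv.arrowCongr e (Equiv.refl T))
  have E1 : ∀ c y, E c (e (Sum.inl y)) = (c y).1 := by
    intro c y; simp [E, Equiv.arrowCongr, Equiv.sumArrowEquivProdArrow,
      Equiv.arrowProdEquivProdArrow]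
  have E2 : ∀ c y, E c (e (Sum.inr y)) = (c y).2 := by
    intro c y; simp [E, Equiv.arrowCongr, Equiv.sumArrowEquivProdArrow,
      Equiv.arrowProdEquivProdArrow]
  rw [← Equiv.sum_comp E, ← hY, ← Finset.card_univ, ← Finset.prod_const, Finset.prod_univ_sum,
    Fintype.piFinset_univ]
  refine Finset.sum_congr rfl fun c _ => ?_
  have hprod : ∏ x, p (E c x) = ∏ y, (p (c y).1 * p (c y).2) := by
    rw [← Equiv.prod_comp e, Fintype.prod_sum_type, Finset.prod_mul_distrib]
    simp only [E1, E2]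
  have hiff : (∀ x, A (E c (g x)) (E c x)) ↔ ∀ y, A (c y).1 (c y).2 := by
    constructor
    · intro H y
      have := H (e (Sum.inr y))
      rwa [h2, E1, E2] at this
    · intro H x
      obtain ⟨z, rfl⟩ := e.surjective x
      rcases z with y | y
      · rw [h1, E1, E2]; exact hA _ _ (H y)
      · rw [h2, E1, E2]; exact H y
  by_cases H : ∀ y, A (c y).1 (c y).2
  · rw [if_pos (hiff.2 H), hprod]
    exact Finset.prod_congr rfl fun y _ => (if_pos (H y)).symm
  · rw [if_neg (fun h => H (hiff.1 h))]
    push Not at H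
    obtain ⟨y, hy⟩ := H
    exact (Finset.prod_eq_zero (Finset.mem_univ y) (if_neg hy)).symm

/-! ### Symmetry under permutations of the clones -/

theorem card_fiber_le {X T : Type} [Fintype X] [DecidableEq X] (c₀ c : X → T) :
    (univ.filter fun π : Equiv.Perm X => c₀ ∘ π = c).card ≤
      (univ.filter fun π : Equiv.Perm X => c₀ ∘ π = c₀).card := by
  rcases (univ.filter fun π : Equiv.Perm X => c₀ ∘ π = c).eq_empty_or_nonempty with h | ⟨π₀, h⟩
  · rw [h]; simp
  · rw [Finset.mem_filter] at h
    refine Finset.card_le_card_of_injOn (fun π => π * π₀⁻¹) ?_ ?_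
    · intro π hπ
      simp only [Finset.coe_filter, Finset.mem_univ, true_and, Set.mem_ofPred_eq] at hπ ⊢
      rw [Equiv.Perm.coe_mul, ← Function.comp_assoc, hπ, ← h.2]
      funext x; simp
    · intro a _ b _ hab
      exact mul_right_cancel hab

theorem card_stab {X T : Type} [Fintype X] [DecidableEq X] [Fintype T] (c : X → T) :
    (univ.filter fun π : Equiv.Perm X => c ∘ π = c).card =
      ∏ t, (univ.filter fun x => c x = t).card.factorial := by
  have := DomMulAct.stabilizer_card (f := c)
  rw [Fintype.card_subtype] at this
  rw [this]
  exact Finset.prod_congr rfl fun t _ => by rw [Fintype.card_subtype]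

/-- Each rearrangement of `c₀` arises from exactly `∏ t, N_t !` permutations, with `N_t` the number
of occurrences of `t`; hence a sum over permutations is controlled by one over labelings. -/
theorem sum_perm_le {X T : Type} [Fintype X] [DecidableEq X] [Fintype T] (c₀ : X → T) (F : (X → T) → ℝ)
    (hF : ∀ c, 0 ≤ F c) :
    ∑ π : Equiv.Perm X, F (c₀ ∘ π) ≤
      (∏ t, ((univ.filter fun x => c₀ x = t).card.factorial : ℝ)) * ∑ c, F c := by
  rw [← Finset.sum_fiberwise univ (fun π : Equiv.Perm X => c₀ ∘ π), Finset.mul_sum]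
  refine Finset.sum_le_sum fun c _ => ?_
  have : ∑ π ∈ univ.filter (fun π : Equiv.Perm X => c₀ ∘ π = c), F (c₀ ∘ π) =
      (univ.filter fun π : Equiv.Perm X => c₀ ∘ π = c).card * F c := by
    rw [← nsmul_eq_mul, ← Finset.sum_const]
    refine Finset.sum_congr rfl fun π hπ => ?_
    rw [(Finset.mem_filter.1 hπ).2]
  rw [this]
  refine mul_le_mul_of_nonneg_right ?_ (hF c)
  have := (card_fiber_le c₀ c).trans_eq (card_stab c₀)
  exact_mod_cast this

/-- The number of configurations all of whose matched pairs carry labels related by `A`. -/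
noncomputable def compat {n d : ℕ} {T : Type} (A : T → T → Prop) (c : Fin n × Fin d → T) : ℕ :=
  (univ.filter fun Γ : Config n d => ∀ x, A (c (Γ.1 x)) (c x)).card

/-- Conjugation by `π` embeds the configurations compatible with `c` into those compatible with
`c ∘ π`. -/
theorem compat_comp_le {n d : ℕ} {T : Type} (A : T → T → Prop) (c : Fin n × Fin d → T)
    (π : Equiv.Perm (Fin n × Fin d)) : compat A c ≤ compat A (c ∘ π) := by
  refine Finset.card_le_card_of_injOn
    (fun Γ => ⟨fun x => π.symm (Γ.1 (π x)), fun x => ?_, fun x h => ?_⟩) ?_ ?_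
  · simp [Γ.2.1]
  · exact Γ.2.2 (π x) ((Equiv.symm_apply_eq π).1 h)
  · intro Γ hΓ
    simp only [Finset.coe_filter, Finset.mem_univ, true_and, Set.mem_ofPred_eq] at hΓ ⊢
    intro x
    simpa using hΓ (π x)
  · intro Γ _ Γ' _ h
    refine Subtype.ext (funext fun x => ?_)
    have := congrFun (congrArg Subtype.val h) (π.symm x)
    simpa using this

/-- Up to normalization: the probability of the label counts of `c₀` under independent labels,
times the probability that a random configuration is compatible with `c₀`, is at most the
probability that independent labels are compatible with a fixed configuration. -/
theorem compat_bound {n d : ℕ} {T : Type} [Fintype T] (A : T → T → Prop)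
    (hA : ∀ s t, A s t → A t s) (p : T → ℝ) (hp : ∀ t, 0 ≤ p t) (h : ℕ) (hh : n * d = 2 * h)
    (c₀ : Fin n × Fin d → T) :
    ((n * d).factorial : ℝ) * (∏ x, p (c₀ x)) * compat A c₀ ≤
      (∏ t, ((univ.filter fun x => c₀ x = t).card.factorial : ℝ)) *
        (Fintype.card (Config n d) *
          (∑ st : T × T, if A st.1 st.2 then p st.1 * p st.2 else 0) ^ h) := by
  have hF := sum_perm_le c₀ (fun c => (∏ x, p (c x)) * (compat A c : ℝ))
    (fun c => mul_nonneg (Finset.prod_nonneg fun x _ => hp _) (Nat.cast_nonneg _))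
  have htot : ∑ c : Fin n × Fin d → T, (∏ x, p (c x)) * (compat A c : ℝ) =
      Fintype.card (Config n d) *
          (∑ st : T × T, if A st.1 st.2 then p st.1 * p st.2 else 0) ^ h := by
    have : ∀ c : Fin n × Fin d → T, (∏ x, p (c x)) * (compat A c : ℝ) =
        ∑ Γ : Config n d, if ∀ x, A (c (Γ.1 x)) (c x) then ∏ x, p (c x) else 0 := by
      intro c
      rw [← Finset.sum_filter, Finset.sum_const, nsmul_eq_mul, mul_comm, compat]
    simp only [this]
    rw [Finset.sum_comm, ← Finset.card_univ, ← nsmul_eq_mul, ← Finset.sum_const]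
    refine Finset.sum_congr rfl fun Γ _ => ?_
    exact sum_labelings Γ.1 Γ.2.1 Γ.2.2 A hA p h (by simpa using hh)
  rw [← htot]
  refine le_trans ?_ hF
  have hcard : ((n * d).factorial : ℝ) = ((univ : Finset (Equiv.Perm (Fin n × Fin d))).card : ℝ) := by
    rw [Finset.card_univ, Fintype.card_perm]; simp
  rw [hcard, mul_assoc, ← nsmul_eq_mul, ← Finset.sum_const]
  refine Finset.sum_le_sum fun π _ => ?_
  have h1 : ∏ x, p ((c₀ ∘ π) x) = ∏ x, p (c₀ x) := Equiv.prod_comp π (fun x => p (c₀ x))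
  rw [h1]
  exact mul_le_mul_of_nonneg_left (by exact_mod_cast compat_comp_le A c₀ π)
    (Finset.prod_nonneg fun x _ => hp _)

/-! ### Multinomial estimates -/

theorem factorial_le_stirling (n : ℕ) :
    (n.factorial : ℝ) * Real.exp n ≤ Real.exp 1 * (n + 1) * (n : ℝ) ^ n := by
  have key : ∀ m : ℕ, ((m + 1).factorial : ℝ) * Real.exp (m + 1 : ℕ) ≤
      Real.exp 1 * (m + 1 : ℕ) * ((m + 1 : ℕ) : ℝ) ^ (m + 1) := by
    intro m
    induction m with
    | zero => simp
    | succ m ih =>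
      -- This is `(1 - 1/(m+2)) ^ (m+2) ≤ exp (-1)`, cleared of denominators.
      have h1 : Real.exp 1 * ((m + 1 : ℕ) : ℝ) ^ (m + 2) ≤ ((m + 2 : ℕ) : ℝ) ^ (m + 2) := by
        have h := Real.one_sub_div_pow_le_exp_neg (n := m + 2) (t := 1)
          (by push_cast; linarith [(Nat.cast_nonneg m : (0 : ℝ) ≤ m)])
        have h2 : (1 - 1 / ((m + 2 : ℕ) : ℝ)) = ((m + 1 : ℕ) : ℝ) / ((m + 2 : ℕ) : ℝ) := by
          push_cast
          have : (m : ℝ) + 2 ≠ 0 := by positivity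
          field_simp
          ring
        rw [h2, div_pow, div_le_iff₀ (by positivity), Real.exp_neg] at h
        have h3 := mul_le_mul_of_nonneg_left h (Real.exp_pos 1).le
        rwa [← mul_assoc, mul_inv_cancel₀ (Real.exp_pos 1).ne', one_mul] at h3
      rw [Nat.factorial_succ (m + 1)]
      have he : Real.exp (m + 1 + 1 : ℕ) = Real.exp (m + 1 : ℕ) * Real.exp 1 := by
        rw [← Real.exp_add]; push_cast; rfl
      rw [he]
      calc (((m + 1 + 1) * (m + 1).factorial : ℕ) : ℝ) * (Real.exp (m + 1 : ℕ) * Real.exp 1)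
          = ((m + 2 : ℕ) : ℝ) * Real.exp 1 *
            (((m + 1).factorial : ℝ) * Real.exp (m + 1 : ℕ)) := by push_cast; ring
        _ ≤ ((m + 2 : ℕ) : ℝ) * Real.exp 1 *
            (Real.exp 1 * (m + 1 : ℕ) * ((m + 1 : ℕ) : ℝ) ^ (m + 1)) := by gcongr
        _ = ((m + 2 : ℕ) : ℝ) * Real.exp 1 *
            (Real.exp 1 * ((m + 1 : ℕ) : ℝ) ^ (m + 2)) := by ring
        _ ≤ ((m + 2 : ℕ) : ℝ) * Real.exp 1 * ((m + 2 : ℕ) : ℝ) ^ (m + 2) := by gcongr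
        _ = _ := by ring
  rcases n with _ | m
  · simp
  · refine (key m).trans ?_
    gcongr
    linarith

/-- The multinomial distribution with frequencies `a t / N` gives the count vector `a` probability
at least `(e (N + 1)) ^ (-|T|)`. -/
theorem multinomial_mode {T : Type} [Fintype T] (N : ℕ) (a : T → ℕ) (ha : ∑ t, a t = N) :
    (∏ t, ((a t).factorial : ℝ)) ≤
      (Real.exp 1 * (N + 1)) ^ Fintype.card T *
        ((N.factorial : ℝ) * ∏ t, ((a t : ℝ) / N) ^ a t) := by
  have haN : ∀ t, a t ≤ N := fun t => ha ▸ Finset.single_le_sum (fun _ _ => Nat.zero_le _)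
    (Finset.mem_univ t)
  have h1 : (∏ t, ((a t).factorial : ℝ)) * Real.exp N ≤
      (Real.exp 1 * (N + 1)) ^ Fintype.card T * ∏ t, (a t : ℝ) ^ a t := by
    rw [← ha, Nat.cast_sum, Real.exp_sum, ← Finset.prod_mul_distrib, ← Finset.card_univ,
      ← Finset.prod_const, ← Finset.prod_mul_distrib, ← Nat.cast_sum, ha]
    refine Finset.prod_le_prod (fun t _ => by positivity) fun t _ => ?_
    refine (factorial_le_stirling (a t)).trans ?_
    gcongr
    exact haN t
  have h2 : ∏ t, ((a t : ℝ) / N) ^ a t = (∏ t, (a t : ℝ) ^ a t) / (N : ℝ) ^ N := by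
    simp only [div_pow]
    rw [Finset.prod_div_distrib, Finset.prod_pow_eq_pow_sum, ha]
  have h3 : (N : ℝ) ^ N ≤ N.factorial * Real.exp N := by
    have := Real.pow_div_factorial_le_exp (x := (N : ℝ)) (Nat.cast_nonneg N) N
    rw [div_le_iff₀ (by positivity)] at this
    linarith
  have hN : (0 : ℝ) < (N : ℝ) ^ N := by
    rcases N.eq_zero_or_pos with h | h
    · subst h; simp
    · positivity
  rw [h2, ← mul_div_assoc, ← mul_div_assoc, le_div_iff₀ hN]
  calc (∏ t, ((a t).factorial : ℝ)) * (N : ℝ) ^ N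
      ≤ (∏ t, ((a t).factorial : ℝ)) * (N.factorial * Real.exp N) := by gcongr
    _ = N.factorial * ((∏ t, ((a t).factorial : ℝ)) * Real.exp N) := by ring
    _ ≤ N.factorial * ((Real.exp 1 * (N + 1)) ^ Fintype.card T * ∏ t, (a t : ℝ) ^ a t) := by
        gcongr
    _ = _ := by ring

/-- The labelings with label counts `a` all have weight `∏ t, p t ^ a t`, and the total weight of
all labelings is `1`. -/
theorem card_labelings_le {V T : Type} [Fintype V] [DecidableEq V] [Fintype T] (p : T → ℝ) (hp : ∀ t, 0 ≤ p t)
    (hp1 : ∑ t, p t = 1) (a : T → ℕ) (S : Finset (V → T))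
    (hS : ∀ c ∈ S, ∀ t, (univ.filter fun v => c v = t).card = a t) :
    (S.card : ℝ) * ∏ t, p t ^ a t ≤ 1 := by
  have h1 : ∑ c : V → T, ∏ v, p (c v) = 1 := by
    have := Finset.prod_univ_sum (fun _ : V => (univ : Finset T)) (fun _ t => p t)
    rw [Fintype.piFinset_univ] at this
    rw [← this]; simp [hp1]
  rw [← nsmul_eq_mul, ← Finset.sum_const, ← h1]
  refine le_trans (Finset.sum_le_sum fun c hc => ?_)
    (Finset.sum_le_sum_of_subset_of_nonneg (Finset.subset_univ S)
      fun c _ _ => Finset.prod_nonneg fun v _ => hp _)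
  rw [Finset.prod_comp p c]
  refine le_of_eq (by
    simp only [← hS c hc]
    symm
    refine Finset.prod_subset (Finset.subset_univ _) fun t _ ht => ?_
    rw [Finset.card_eq_zero.2, pow_zero]
    refine Finset.filter_eq_empty_iff.2 fun v _ hv => ht ?_
    exact Finset.mem_image.2 ⟨v, Finset.mem_univ _, hv⟩)

end RRG

namespace RRG

/-! ### Pairs of colors -/

/-- Two vertices with these pairs of colors under `(σ, τ)` may be matched when both `σ` and `τ`
are to be proper. -/
def Allowed {k : ℕ} (s t : Fin k × Fin k) : Prop := s.1 ≠ t.1 ∧ s.2 ≠ t.2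

/-- Two independent pairs of colors with law `ρ / k` differ in both coordinates with probability
`1 - 2/k + (1/k²) Σ ρ_ij²`, by inclusion-exclusion. -/
theorem sum_allowed (k : ℕ) (hk : 0 < k) (ρ : Fin k → Fin k → ℝ) (hρ : DStoch k ρ) :
    (∑ st : (Fin k × Fin k) × (Fin k × Fin k),
      if Allowed st.1 st.2 then
        (ρ st.1.1 st.1.2 / k) * (ρ st.2.1 st.2.2 / k) else 0) =
      1 - 2 / (k : ℝ) + (1 / (k : ℝ) ^ 2) * ∑ i, ∑ j, (ρ i j) ^ 2 := by
  obtain ⟨-, hrow, hcol⟩ := hρ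
  have hk' : (k : ℝ) ≠ 0 := by positivity
  have hterm : ∀ i j i' j' : Fin k, (if Allowed (i, j) (i', j') then
        (ρ i j / k) * (ρ i' j' / k) else 0) =
      (1 / (k : ℝ) ^ 2) * (ρ i j * ρ i' j' - (if i = i' then ρ i j * ρ i' j' else 0)
        - (if j = j' then ρ i j * ρ i' j' else 0)
        + (if i = i' then (if j = j' then ρ i j * ρ i' j' else 0) else 0)) := by
    intro i j i' j'
    by_cases h1 : i = i' <;> by_cases h2 : j = j' <;> simp [Allowed, h1, h2]
    field_simp
  simp only [Fintype.sum_prod_type, hterm]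
  simp only [← Finset.mul_sum, Finset.sum_add_distrib, Finset.sum_sub_distrib]
  have e1 : ∑ i, ∑ j, ρ i j * ∑ i', ∑ j', ρ i' j' = (k : ℝ) ^ 2 := by
    simp [← Finset.sum_mul, hrow, sq]
  have e2 : ∑ i, ∑ j, ∑ i', ∑ j', (if i = i' then ρ i j * ρ i' j' else 0) = (k : ℝ) := by
    have : ∀ i j : Fin k, ∑ i', ∑ j', (if i = i' then ρ i j * ρ i' j' else 0) = ρ i j := by
      intro i j
      rw [Finset.sum_comm]
      simp [← Finset.mul_sum, hrow]
    simp only [this]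
    simp [hrow]
  have e3 : ∑ i, ∑ j, ∑ i', ∑ j', (if j = j' then ρ i j * ρ i' j' else 0) = (k : ℝ) := by
    have : ∀ i j : Fin k, ∑ i', ∑ j', (if j = j' then ρ i j * ρ i' j' else 0) = ρ i j := by
      intro i j
      simp [← Finset.mul_sum, hcol]
    simp only [this]
    simp [hrow]
  have e4 : ∑ i, ∑ j, ∑ i', ∑ j',
      (if i = i' then (if j = j' then ρ i j * ρ i' j' else 0) else 0) =
        ∑ i, ∑ j, (ρ i j) ^ 2 := by
    refine Finset.sum_congr rfl fun i _ => Finset.sum_congr rfl fun j _ => ?_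
    rw [Finset.sum_comm]
    simp [sq]
  rw [e1, e2, e3, e4]
  field_simp
  ring

/-- The pair of colors of a vertex under a pair of colorings. -/
def typ {n k : ℕ} (st : (Fin n → Fin k) × (Fin n → Fin k)) (v : Fin n) : Fin k × Fin k :=
  (st.1 v, st.2 v)

theorem typ_injective {n k : ℕ} : Function.Injective (typ (n := n) (k := k)) := by
  intro a b h
  refine Prod.ext (funext fun v => ?_) (funext fun v => ?_)
  · exact congrArg Prod.fst (congrFun h v)
  · exact congrArg Prod.snd (congrFun h v)

/-- `∏ p_ij ^ (n p_ij) = exp (-n H(p))` for `p = ρ / k`, where `H(p)` is the entropy. -/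
theorem entropy_prod (n k : ℕ) (hk : 0 < k) (hn : 0 < n) (ρ : Fin k → Fin k → ℝ)
    (hρ : DStoch k ρ) (m : Fin k → Fin k → ℕ)
    (hm : ∀ i j, ρ i j * ((n : ℝ) / (k : ℝ)) = m i j) :
    (∏ t : Fin k × Fin k, (ρ t.1 t.2 / k) ^ m t.1 t.2) *
      Real.exp (n * (Real.log k - (1 / (k : ℝ)) * ∑ i, ∑ j, ρ i j * Real.log (ρ i j))) = 1 := by
  have hk' : (0 : ℝ) < k := by positivity
  have hn' : (0 : ℝ) < n := by positivity
  have hterm : ∀ t : Fin k × Fin k, (ρ t.1 t.2 / k) ^ m t.1 t.2 =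
      Real.exp ((n / k : ℝ) * (ρ t.1 t.2 * Real.log (ρ t.1 t.2) - ρ t.1 t.2 * Real.log k)) := by
    intro t
    rcases (hρ.1 t.1 t.2).eq_or_lt with h | h
    · have : m t.1 t.2 = 0 := by
        have := hm t.1 t.2
        rw [← h, zero_mul] at this
        exact_mod_cast this.symm
      rw [this, ← h]; simp
    · rw [← Real.exp_log (pow_pos (div_pos h hk') _), Real.log_pow, Real.log_div h.ne' hk'.ne',
        ← hm]
      congr 1
      ring
  simp only [hterm]
  rw [← Real.exp_sum, ← Real.exp_add, ← Finset.mul_sum, Finset.sum_sub_distrib, ← Finset.sum_mul,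
    Fintype.sum_prod_type, Fintype.sum_prod_type]
  simp only [hρ.2.1]
  rw [Real.exp_eq_one_iff]
  simp
  field_simp
  ring

theorem poly_bound (d n : ℕ) (hd : 1 ≤ d) (hn : 2 ≤ n) :
    Real.exp 1 * ((n * d : ℕ) + 1) ≤ (n : ℝ) ^ (6 * d + 1) := by
  have h1 : Real.exp 1 ≤ 3 := by linarith [Real.exp_one_lt_d9]
  have h2 : ((n * d : ℕ) : ℝ) + 1 ≤ 2 * d * n := by
    have : n * d + 1 ≤ 2 * d * n := by nlinarith [Nat.mul_le_mul hn hd]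
    exact_mod_cast this
  have h3 : (6 * d : ℝ) ≤ (n : ℝ) ^ (6 * d) := by
    have : 6 * d ≤ n ^ (6 * d) := (Nat.lt_pow_self (by omega)).le
    exact_mod_cast this
  calc Real.exp 1 * ((n * d : ℕ) + 1) ≤ 3 * (2 * d * n) := by gcongr
    _ = (6 * d) * n := by ring
    _ ≤ (n : ℝ) ^ (6 * d) * n := by gcongr
    _ = _ := by rw [pow_succ]

/-- A random configuration is compatible with a vertex labeling of overlap `ρ` with probability at
most `(e (N + 1)) ^ (k²) · Q ^ (N / 2)`, where `N = n d`. -/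
theorem compat_pair_bound {n d k h : ℕ} (hk : 0 < k) (hn : 0 < n) (hd : 0 < d)
    (hh : n * d = 2 * h)
    (ρ : Fin k → Fin k → ℝ) (hρ : DStoch k ρ) (m : Fin k → Fin k → ℕ)
    (hm : ∀ i j, ρ i j * ((n : ℝ) / (k : ℝ)) = m i j) (c : Fin n → Fin k × Fin k)
    (hc : ∀ t, (univ.filter fun v => c v = t).card = m t.1 t.2) :
    (compat (d := d) (Allowed (k := k)) (fun x => c x.1) : ℝ) ≤
      (Real.exp 1 * ((n * d : ℕ) + 1)) ^ (k * k) * (Fintype.card (Config n d) *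
        (1 - 2 / (k : ℝ) + (1 / (k : ℝ) ^ 2) * ∑ i, ∑ j, (ρ i j) ^ 2) ^ h) := by
  have hk' : (0 : ℝ) < k := by positivity
  have hn' : (0 : ℝ) < n := by positivity
  have hd' : (0 : ℝ) < d := by positivity
  set p : Fin k × Fin k → ℝ := fun t => ρ t.1 t.2 / k with hpdef
  have hp : ∀ t, 0 ≤ p t := fun t => div_nonneg (hρ.1 _ _) hk'.le
  have hclone : ∀ t, (univ.filter fun x : Fin n × Fin d => c x.1 = t).card = m t.1 t.2 * d := by
    intro t
    have : (univ.filter fun x : Fin n × Fin d => c x.1 = t) =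
        (univ.filter fun v => c v = t) ×ˢ (univ : Finset (Fin d)) := by
      ext x; simp
    rw [this, Finset.card_product, hc]; simp
  have hsum : ∑ t : Fin k × Fin k, m t.1 t.2 * d = n * d := by
    rw [← Finset.sum_mul]
    congr 1
    simp only [← hc]
    rw [← Finset.card_eq_sum_card_fiberwise (fun _ _ => Finset.mem_univ _)]
    simp
  have hpt : ∀ t : Fin k × Fin k, ((m t.1 t.2 * d : ℕ) : ℝ) / (n * d : ℕ) = p t := by
    intro t
    push_cast
    rw [← hm, hpdef]
    field_simp
  have hmode := multinomial_mode (n * d) (fun t : Fin k × Fin k => m t.1 t.2 * d) hsum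
  simp only [hpt] at hmode
  have hb := compat_bound (d := d) (Allowed (k := k))
    (fun s t h => ⟨h.1.symm, h.2.symm⟩) p hp h hh (fun x => c x.1)
  have hallow := sum_allowed k hk ρ hρ
  rw [show (∑ st : (Fin k × Fin k) × (Fin k × Fin k), if Allowed st.1 st.2 then
      p st.1 * p st.2 else 0) = _ from hallow] at hb
  have hprod : ∏ x : Fin n × Fin d, p (c x.1) = ∏ t : Fin k × Fin k, p t ^ (m t.1 t.2 * d) := by
    rw [Finset.prod_comp p (fun x : Fin n × Fin d => c x.1)]
    simp only [← hclone]
    refine Finset.prod_subset (Finset.subset_univ _) fun t _ ht => ?_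
    rw [Finset.card_eq_zero.2, pow_zero]
    refine Finset.filter_eq_empty_iff.2 fun v _ hv => ht ?_
    exact Finset.mem_image.2 ⟨v, Finset.mem_univ _, hv⟩
  rw [hprod] at hb
  -- The same count, for the decidability instance that `compat_bound` carries.
  have hclone' : ∀ t, (@Finset.filter (Fin n × Fin d) (fun x => c x.1 = t)
      (fun _ => Classical.propDecidable _) univ).card = m t.1 t.2 * d := fun t => by
    convert hclone t
  simp only [hclone'] at hb
  -- A color pair of frequency `0` does not occur and contributes `0 ^ 0 = 1`.
  have hP : 0 < ∏ t : Fin k × Fin k, p t ^ (m t.1 t.2 * d) := by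
    refine Finset.prod_pos fun t _ => ?_
    rcases (hp t).eq_or_lt with h0 | h0
    · have h1 := hpt t
      rw [← h0, div_eq_zero_iff] at h1
      have h2 : m t.1 t.2 * d = 0 := by
        rcases h1 with h1 | h1
        · exact_mod_cast h1
        · exact absurd h1 (by positivity)
      rw [h2]; simp
    · positivity
  have hQ : 0 ≤ (Fintype.card (Config n d) *
        (1 - 2 / (k : ℝ) + (1 / (k : ℝ) ^ 2) * ∑ i, ∑ j, (ρ i j) ^ 2) ^ h) := by
    rw [← sum_allowed k hk ρ hρ]
    refine mul_nonneg (Nat.cast_nonneg _) (pow_nonneg (Finset.sum_nonneg fun st _ => ?_) _)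
    split_ifs
    · exact mul_nonneg (hp st.1) (hp st.2)
    · exact le_rfl
  have hfac : (0 : ℝ) < (n * d).factorial := by positivity
  have h3 := hb.trans (mul_le_mul_of_nonneg_right hmode hQ)
  rw [Fintype.card_prod, Fintype.card_fin] at h3
  refine le_of_mul_le_mul_left (h3.trans_eq ?_) (mul_pos hfac hP)
  ring

/-! ### The first moment of the number of pairs -/

theorem EZoverlap_le (k d n : ℕ) (hk : 3 ≤ k) (hd : 3 ≤ d) (hn : 2 ≤ n) (he : Even (d * n))
    (ρ : Fin k → Fin k → ℝ) (hρ : DStoch k ρ)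
    (hm : ∀ i j, ∃ m : ℕ, ρ i j * ((n : ℝ) / (k : ℝ)) = m) :
    EZoverlap n d k ρ ≤ ((n : ℝ) ^ (6 * d + 1)) ^ (k * k) *
      Real.exp ((n : ℝ) * fBethe k d ρ) := by
  choose m hm using hm
  obtain ⟨h, hh⟩ := he
  have hh' : n * d = 2 * h := by rw [mul_comm, hh]; ring
  have hk0 : 0 < k := by omega
  have hn0 : 0 < n := by omega
  have hd0 : 0 < d := by omega
  have hk' : (0 : ℝ) < k := by positivity
  have hn' : (0 : ℝ) < n := by positivity
  set S : Finset ((Fin n → Fin k) × (Fin n → Fin k)) :=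
    univ.filter fun st => ∀ i j, overlap st.1 st.2 i j = ρ i j with hS
  have hScount : ∀ st ∈ S, ∀ t : Fin k × Fin k,
      (univ.filter fun v => typ st v = t).card = m t.1 t.2 := by
    intro st hst t
    have h1 := (Finset.mem_filter.1 hst).2 t.1 t.2
    have h2 : (univ.filter fun v => typ st v = t) =
        colorClass st.1 t.1 ∩ colorClass st.2 t.2 := by
      ext v; simp [typ, colorClass, Prod.ext_iff]
    rw [h2]
    have h3 := hm t.1 t.2
    rw [← h1, overlap] at h3
    have h4 : ((colorClass st.1 t.1 ∩ colorClass st.2 t.2).card : ℝ) = m t.1 t.2 := by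
      rw [← h3]; field_simp
    exact_mod_cast h4
  set Q : ℝ := 1 - 2 / (k : ℝ) + (1 / (k : ℝ) ^ 2) * ∑ i, ∑ j, (ρ i j) ^ 2 with hQ
  -- Positivity of `Q` matters because `Real.log 0 = 0` is a junk value.
  have hQpos : 0 < Q := by
    have h1 : (2 : ℝ) / k < 1 := by
      rw [div_lt_one hk']; exact_mod_cast (by omega : 2 < k)
    have h2 : 0 ≤ (1 / (k : ℝ) ^ 2) * ∑ i, ∑ j, (ρ i j) ^ 2 := by positivity
    rw [hQ]; linarith
  set B : ℝ := (Real.exp 1 * ((n * d : ℕ) + 1)) ^ (k * k) with hB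
  have hBpos : 0 ≤ B := by positivity
  have hZ : ∀ Γ : Config n d, (Zoverlap n d k ρ Γ : ℝ) ≤
      ∑ st ∈ S, if ∀ x, Allowed (typ st (Γ.1 x).1) (typ st x.1) then (1 : ℝ) else 0 := by
    intro Γ
    rw [← Finset.sum_filter, Finset.sum_const, nsmul_eq_mul, mul_one, Zoverlap]
    refine Nat.cast_le.2 (Finset.card_le_card fun st hst => ?_)
    obtain ⟨-, -, -, h1, h2, h3⟩ := Finset.mem_filter.1 hst
    exact Finset.mem_filter.2 ⟨Finset.mem_filter.2 ⟨Finset.mem_univ _, h3⟩,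
      fun x => ⟨h1 x, h2 x⟩⟩
  have hsum : ∑ Γ : Config n d, (Zoverlap n d k ρ Γ : ℝ) ≤
      S.card * (B * (Fintype.card (Config n d) * Q ^ h)) := by
    refine (Finset.sum_le_sum fun Γ _ => hZ Γ).trans ?_
    rw [Finset.sum_comm, ← nsmul_eq_mul, ← Finset.sum_const]
    refine Finset.sum_le_sum fun st hst => ?_
    refine le_trans (le_of_eq ?_)
      (compat_pair_bound hk0 hn0 hd0 hh' ρ hρ m hm (typ st) (hScount st hst))
    rw [← Finset.sum_filter, Finset.sum_const, nsmul_eq_mul, mul_one, compat]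
  have hcardS : (S.card : ℝ) ≤
      Real.exp (n * (Real.log k - (1 / (k : ℝ)) * ∑ i, ∑ j, ρ i j * Real.log (ρ i j))) := by
    have h1 := card_labelings_le (fun t : Fin k × Fin k => ρ t.1 t.2 / k)
      (fun t => div_nonneg (hρ.1 _ _) hk'.le)
      (by rw [← Finset.sum_div, Fintype.sum_prod_type]; simp [hρ.2.1, hk'.ne'])
      (fun t => m t.1 t.2) (S.image typ) (by
        intro c hc t
        obtain ⟨st, hst, rfl⟩ := Finset.mem_image.1 hc
        convert hScount st hst t)
    rw [Finset.card_image_of_injective _ typ_injective] at h1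
    have h2 := entropy_prod n k hk0 hn0 ρ hρ m hm
    have h3 := mul_le_mul_of_nonneg_right h1 (Real.exp_pos
      (n * (Real.log k - (1 / (k : ℝ)) * ∑ i, ∑ j, ρ i j * Real.log (ρ i j)))).le
    rwa [mul_assoc, h2, mul_one, one_mul] at h3
  have hexp : Real.exp ((n : ℝ) * fBethe k d ρ) =
      Real.exp (n * (Real.log k - (1 / (k : ℝ)) * ∑ i, ∑ j, ρ i j * Real.log (ρ i j))) *
        Q ^ h := by
    rw [← Real.exp_log (pow_pos hQpos h), ← Real.exp_add, Real.log_pow, fBethe, ← hQ]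
    congr 1
    have : (n : ℝ) * d = 2 * h := by exact_mod_cast hh'
    linear_combination (Real.log Q / 2) * this
  have hEZ : EZoverlap n d k ρ ≤ S.card * (B * Q ^ h) := by
    rw [EZoverlap, confExp]
    refine div_le_of_le_mul₀ (Nat.cast_nonneg _) (by positivity) (hsum.trans_eq (by ring))
  refine hEZ.trans ?_
  rw [hexp]
  have hBle : B ≤ ((n : ℝ) ^ (6 * d + 1)) ^ (k * k) := by
    rw [hB]
    gcongr
    exact poly_bound d n hd0 hn
  calc (S.card : ℝ) * (B * Q ^ h) = B * (S.card * Q ^ h) := by ring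
    _ ≤ _ := by gcongr

end RRG

/-- For fixed `k ≥ 3` and `d ≥ 3` there is `C = C(k,d) > 0` such that for
all `n ≥ 2` divisible by `k` with `d·n` even and every `n`-overlap matrix `ρ`:
`E[Z_{ρ,bal}] ≤ n^C · exp(n·f(ρ))`. -/
theorem statement_16 :
    ∀ k d : ℕ, 3 ≤ k → 3 ≤ d →
      ∃ C : ℝ, 0 < C ∧
        ∀ n : ℕ, 2 ≤ n → k ∣ n → Even (d * n) →
          ∀ ρ : Fin k → Fin k → ℝ, DStoch k ρ →
            (∀ i j, ∃ m : ℕ, ρ i j * ((n : ℝ) / (k : ℝ)) = m) →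
            EZoverlap n d k ρ ≤ (n : ℝ) ^ (C : ℝ) * Real.exp ((n : ℝ) * fBethe k d ρ) := by
  intro k d hk hd
  refine ⟨(((6 * d + 1) * (k * k) : ℕ) : ℝ), by positivity, ?_⟩
  intro n hn _ he ρ hρ hm
  rw [Real.rpow_natCast, pow_mul]
  exact EZoverlap_le k d n hk hd hn he ρ hρ hm
end
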